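/- arXiv:1301.7215 — 2 statements merged into one kernel-verified Lean document; each statement's English description precedes it below -/
import Mathlib

section
/- Let n ≥ 2 and 0 ≤ k ≤ n−2. Let f ∈ MvPolynomial (Fin n × Fin n) ℂ be homogeneous of degree exactly (n−k)(n−k−1), invariant under special unitary conjugation on Hermitian matrices (f(g·A·g*) = f(A) for all g with g·g* = 1, det g = 1, and all Hermitian A), and suppose f(A) = 0 for every Hermitian A with at most n−k−1 distinct eigenvalues (equivalently, A^0, …, A^{n−k−1} linearly dependent). Then there exists a constant c ∈ ℂ such that for every Hermitian A with eigenvalues λ₁(A), …, λ_n(A) (listed with multiplicity), f(A) = c · Σ_{1≤i₁<⋯<i_{n−k}≤n} ∏_{1≤s<t≤n−k} (λ_{i_s}(A) − λ_{i_t}(A))². -/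
/-!
By the spectral theorem a unitarily invariant polynomial is determined on Hermitian matrices by its
restriction to diagonal matrices, a symmetric polynomial in the eigenvalues; a central scalar turns
a unitary matrix into a special unitary one. With `m = n - k`, the restriction vanishes at all
points with fewer than `m` distinct coordinates, and such polynomials form the ideal generated by
the Vandermonde determinants in `m` of the variables: view a polynomial as one in a single variable
`X`, and divide by the products `∏ j, (X - X (e j))`.

In degree `m * (m - 1)` a symmetric element of this ideal is, up to a factorial, the symmetrization
of a sum of terms (monomial of degree `m * (m - 1) / 2`) * (Vandermonde determinant). A term
contributes zero if two variables of its determinant have the same exponent in its monomial, since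
swapping them changes the sign. Otherwise the exponents are distinct with sum at most
`0 + 1 + ⋯ + (m - 1)`, hence they are `0, …, m - 1` in some order, and all these terms have, up to
scalars, the same symmetrization, namely the subdiscriminant.
-/

namespace Subdiscriminant

open Finset MvPolynomial Equiv
open scoped Nat

section Vandermonde

variable {σ τ R : Type*} [CommRing R] {m : ℕ}

/-- The Vandermonde determinant in the variables `X (e 0), …, X (e (m - 1))`. Indexing by a map
rather than by a set of variables makes it equivariant under renaming, with no signs. -/
noncomputable def vandermonde (R : Type*) [CommRing R] {σ : Type*} {m : ℕ} (e : Fin m → σ) :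
    MvPolynomial σ R :=
  (Matrix.vandermonde fun i => (X (e i) : MvPolynomial σ R)).det

lemma vandermonde_eq_prod (e : Fin m → σ) :
    vandermonde R e = ∏ i, ∏ j ∈ Ioi i, (X (e j) - X (e i)) :=
  Matrix.det_vandermonde _

lemma vandermonde_eq_sum_perm (e : Fin m → σ) :
    vandermonde R e = ∑ ρ : Perm (Fin m), (Perm.sign ρ : ℤ) • ∏ i, X (e (ρ i)) ^ (i : ℕ) := by
  simp only [vandermonde, Matrix.det_apply, Matrix.vandermonde_apply, Units.smul_def]

lemma rename_vandermonde (f : σ → τ) (e : Fin m → σ) :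
    rename f (vandermonde R e) = vandermonde R (f ∘ e) := by
  simp only [vandermonde_eq_prod, map_prod, map_sub, rename_X, Function.comp_apply]

lemma vandermonde_comp_perm (e : Fin m → σ) (ρ : Perm (Fin m)) :
    vandermonde R (e ∘ ρ) = (Perm.sign ρ : ℤ) • vandermonde R e := by
  simpa only [zsmul_eq_mul] using!
    Matrix.det_permute ρ (Matrix.vandermonde fun i => (X (e i) : MvPolynomial σ R))

lemma vandermonde_eq_zero {e : Fin m → σ} (he : ¬ e.Injective) : vandermonde R e = 0 := by
  obtain ⟨i, j, hij, hne⟩ := Function.not_injective_iff.mp he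
  exact Matrix.det_zero_of_row_eq hne (by ext k; simp [Matrix.vandermonde_apply, hij])

lemma isHomogeneous_vandermonde (e : Fin m → σ) :
    (vandermonde R e).IsHomogeneous (∑ i ∈ range m, i) := by
  rw [vandermonde_eq_sum_perm, ← Fin.sum_univ_eq_sum_range (fun i => i) m]
  refine .sum _ _ _ fun ρ _ => ?_
  rw [zsmul_eq_mul, ← map_intCast (C : R →+* MvPolynomial σ R)]
  exact (IsHomogeneous.prod _ _ _ fun i _ => isHomogeneous_X_pow _ _).C_mul _

lemma eval_vandermonde_eq_zero [Finite σ] {x : σ → R} (hx : (Set.range x).ncard < m)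
    (e : Fin m → σ) : eval x (vandermonde R e) = 0 := by
  have hnot : ¬ (x ∘ e).Injective := fun hinj => by
    have := Set.ncard_le_ncard (Set.range_comp_subset_range e x) (Set.finite_range x)
    rw [← Nat.card_coe_set_eq, Nat.card_range_of_injective hinj, Nat.card_fin] at this
    omega
  obtain ⟨i, j, hij, hne⟩ := Function.not_injective_iff.mp hnot
  rw [vandermonde, RingHom.map_det]
  exact Matrix.det_zero_of_row_eq hne (by ext k; simpa using congrArg (· ^ (k : ℕ)) hij)

end Vandermonde

section VandermondeIdeal

variable {R : Type*} [CommRing R] {n m : ℕ}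

/-- The ideal generated by the Vandermonde determinants in `m` of the variables. Over an
infinite domain it is the vanishing ideal of the set of points with fewer than `m` distinct
coordinates, by `mem_vandermondeIdeal_of_forall_eval_eq_zero`. -/
noncomputable def vandermondeIdeal (σ R : Type*) [CommRing R] (m : ℕ) :
    Ideal (MvPolynomial σ R) :=
  Ideal.span (Set.range fun e : Fin m → σ => vandermonde R e)

lemma vandermonde_mem_vandermondeIdeal {σ : Type*} (e : Fin m → σ) :
    vandermonde R e ∈ vandermondeIdeal σ R m :=
  Ideal.subset_span ⟨e, rfl⟩

lemma eval_eq_zero_of_mem_vandermondeIdeal {σ : Type*} [Finite σ] {x : σ → R}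
    (hx : (Set.range x).ncard < m) {q : MvPolynomial σ R} (hq : q ∈ vandermondeIdeal σ R m) :
    eval x q = 0 := by
  have hle : vandermondeIdeal σ R m ≤ RingHom.ker (eval x) :=
    Ideal.span_le.mpr (Set.range_subset_iff.mpr (eval_vandermonde_eq_zero hx))
  exact hle hq

lemma vandermondeIdeal_zero {σ : Type*} : vandermondeIdeal σ R 0 = ⊤ :=
  (Ideal.eq_top_iff_one _).mpr <| by
    simpa [vandermonde] using vandermonde_mem_vandermondeIdeal (R := R) (Fin.elim0 : Fin 0 → σ)

lemma finSuccEquiv_vandermonde_succ (e : Fin m → Fin n) :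
    finSuccEquiv R n (vandermonde R (Fin.succ ∘ e)) = Polynomial.C (vandermonde R e) := by
  simp only [vandermonde_eq_prod, map_prod, map_sub, Function.comp_apply, finSuccEquiv_X_succ]

lemma finSuccEquiv_vandermonde_snoc (e : Fin m → Fin n) :
    finSuccEquiv R n (vandermonde R (Fin.snoc (Fin.succ ∘ e) 0 : Fin (m + 1) → Fin (n + 1))) =
      Polynomial.C (vandermonde R e) * ∏ j, (Polynomial.X - Polynomial.C (X (e j))) := by
  have hprod {l : ℕ} (e' : Fin l → Fin (n + 1)) :
      vandermonde R e' = ∏ j, ∏ i ∈ Iio j, (X (e' j) - X (e' i)) :=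
    (vandermonde_eq_prod e').trans (prod_comm' (by simp))
  rw [← finSuccEquiv_vandermonde_succ, hprod, hprod, Fin.prod_univ_castSucc, map_mul]
  congr 1
  · simp only [Fin.prod_Iio_castSucc, Fin.snoc_castSucc, Function.comp_apply]
  · simp [Fin.Iio_last_eq_map, finSuccEquiv_X_zero, finSuccEquiv_X_succ]

lemma finSuccEquiv_symm_mem_vandermondeIdeal {P : Polynomial (MvPolynomial (Fin n) R)}
    (hP : ∀ d, P.coeff d ∈ vandermondeIdeal (Fin n) R m) :
    (finSuccEquiv R n).symm P ∈ vandermondeIdeal (Fin (n + 1)) R m := by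
  have hmap : (vandermondeIdeal (Fin n) R m).map Polynomial.C ≤
      (vandermondeIdeal (Fin (n + 1)) R m).comap (finSuccEquiv R n).symm := by
    rw [vandermondeIdeal, Ideal.map_span, Ideal.span_le]
    rintro - ⟨-, ⟨e, rfl⟩, rfl⟩
    simpa [← finSuccEquiv_vandermonde_succ] using vandermonde_mem_vandermondeIdeal (Fin.succ ∘ e)
  exact hmap (Ideal.mem_map_C_iff.mpr hP)

/-- Division by the monic polynomials `∏ j, (X - X (e j))`: their products with the generators
`vandermonde R e` are generators of the larger Vandermonde ideal. -/
lemma exists_degree_lt_sub_mem_vandermondeIdeal [Nontrivial R] {q : MvPolynomial (Fin (n + 1)) R}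
    (hq : ∀ d, (finSuccEquiv R n q).coeff d ∈ vandermondeIdeal (Fin n) R m) :
    ∃ r : Polynomial (MvPolynomial (Fin n) R), r.degree < m ∧
      q - (finSuccEquiv R n).symm r ∈ vandermondeIdeal (Fin (n + 1)) R (m + 1) := by
  have hmem : finSuccEquiv R n q ∈
      Ideal.span (Set.range fun e : Fin m → Fin n => Polynomial.C (vandermonde R e)) := by
    have := Ideal.mem_map_C_iff.mpr hq
    rwa [vandermondeIdeal, Ideal.map_span, ← Set.range_comp] at this
  obtain ⟨c, hc⟩ := Ideal.mem_span_range_iff_exists_fun.mp hmem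
  let M (e : Fin m → Fin n) : Polynomial (MvPolynomial (Fin n) R) :=
    ∏ j, (Polynomial.X - Polynomial.C (X (e j)))
  have hmonic (e) : (M e).Monic := Polynomial.monic_prod_X_sub_C _ _
  have hdegree (e) : (M e).degree = m := by
    simp [Polynomial.degree_eq_natDegree (hmonic e).ne_zero, M]
  refine ⟨∑ e, Polynomial.C (vandermonde R e) * (c e %ₘ M e), ?_, ?_⟩
  · rw [← Polynomial.mem_degreeLT]
    refine Submodule.sum_mem _ fun e _ => ?_
    rw [← Polynomial.smul_eq_C_mul]
    refine Submodule.smul_mem _ _ (Polynomial.mem_degreeLT.mpr ?_)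
    exact (Polynomial.degree_modByMonic_lt _ (hmonic e)).trans_eq (hdegree e)
  · have hdiv : q - (finSuccEquiv R n).symm (∑ e, Polynomial.C (vandermonde R e) * (c e %ₘ M e)) =
        ∑ e, (finSuccEquiv R n).symm (c e /ₘ M e) *
          vandermonde R (Fin.snoc (Fin.succ ∘ e) 0 : Fin (m + 1) → Fin (n + 1)) := by
      apply (finSuccEquiv R n).injective
      simp only [map_sub, AlgEquiv.apply_symm_apply, ← hc, map_sum, map_mul,
        finSuccEquiv_vandermonde_snoc, ← sum_sub_distrib]
      refine sum_congr rfl fun e _ => ?_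
      linear_combination
        -Polynomial.C (vandermonde R e) * Polynomial.modByMonic_add_div (c e) (M e)
    rw [hdiv]
    exact Ideal.sum_mem _ fun e _ => Ideal.mul_mem_left _ _ (vandermonde_mem_vandermondeIdeal _)

lemma eval_coeff_finSuccEquiv_eq_zero [IsDomain R] {q : MvPolynomial (Fin (n + 1)) R}
    {x : Fin n → R} {T : Set R} (hT : T.Infinite)
    (hq : ∀ y ∈ T, eval (Fin.cons y x : Fin (n + 1) → R) q = 0) (d : ℕ) :
    eval x ((finSuccEquiv R n q).coeff d) = 0 := by
  have hzero : (finSuccEquiv R n q).map (eval x) = 0 :=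
    Polynomial.eq_zero_of_infinite_isRoot _ <| hT.mono fun y hy => by
      rw [Set.mem_ofPred_eq, Polynomial.IsRoot, ← eval_eq_eval_mv_eval', hq y hy]
  rw [← Polynomial.coeff_map, hzero, Polynomial.coeff_zero]

lemma eval_coeff_eq_zero_of_degree_lt_ncard [IsDomain R] {r : Polynomial (MvPolynomial (Fin n) R)}
    {x : Fin n → R} {T : Set R} (hT : T.Finite) (hdegree : r.degree < T.ncard)
    (hr : ∀ y ∈ T, eval (Fin.cons y x : Fin (n + 1) → R) ((finSuccEquiv R n).symm r) = 0)
    (d : ℕ) : eval x (r.coeff d) = 0 := by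
  have hzero : r.map (eval x) = 0 := by
    refine Polynomial.eq_zero_of_degree_lt_of_eval_finset_eq_zero hT.toFinset ?_ fun y hy => ?_
    · rw [← Set.ncard_eq_toFinset_card T hT]
      exact Polynomial.degree_map_le.trans_lt hdegree
    · simpa [eval_eq_eval_mv_eval'] using hr y (hT.mem_toFinset.mp hy)
  rw [← Polynomial.coeff_map, hzero, Polynomial.coeff_zero]

theorem mem_vandermondeIdeal_of_forall_eval_eq_zero [IsDomain R] {S : Set R} (hS : S.Infinite)
    {q : MvPolynomial (Fin n) R}
    (hq : ∀ x : Fin n → R, (∀ i, x i ∈ S) → (Set.range x).ncard < m → eval x q = 0) :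
    q ∈ vandermondeIdeal (Fin n) R m := by
  induction n generalizing m with
  | zero =>
    obtain rfl | hm := m.eq_zero_or_pos
    · exact vandermondeIdeal_zero (R := R) ▸ Submodule.mem_top
    · have hzero : q = 0 := funext_set (fun _ => S) (fun _ => hS) fun x _ => by
        rw [map_zero, hq x (fun i => i.elim0) (by simpa)]
      exact hzero ▸ zero_mem _
  | succ n ih =>
    obtain _ | m := m
    · exact vandermondeIdeal_zero (R := R) ▸ Submodule.mem_top
    have hcons {x : Fin n → R} (hx : ∀ i, x i ∈ S) {y : R} (hy : y ∈ S) (i) :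
        (Fin.cons y x : Fin (n + 1) → R) i ∈ S := i.cases hy hx
    have hcoeff (d) : (finSuccEquiv R n q).coeff d ∈ vandermondeIdeal (Fin n) R m := by
      refine ih fun x hxS hx =>
        eval_coeff_finSuccEquiv_eq_zero hS (fun y hy => hq _ (hcons hxS hy) ?_) d
      rw [Fin.range_cons]
      exact (Set.ncard_insert_le _ _).trans_lt (by omega)
    obtain ⟨r, hrdeg, hr⟩ := exists_degree_lt_sub_mem_vandermondeIdeal hcoeff
    have hcoeff' (d) : r.coeff d ∈ vandermondeIdeal (Fin n) R (m + 1) := by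
      refine ih fun x hxS hx => ?_
      obtain ⟨T, hxT, hTS, hTcard⟩ : ∃ T, Set.range x ⊆ T ∧ T ⊆ S ∧ T.encard = m := by
        refine Set.exists_superset_subset_encard_eq (Set.range_subset_iff.mpr hxS) ?_ ?_
        · rw [← (Set.finite_range x).cast_ncard_eq]
          exact_mod_cast Nat.lt_succ_iff.mp hx
        · exact hS.encard_eq ▸ le_top
      have hTfin := Set.finite_of_encard_eq_coe hTcard
      have hT : T.ncard = m := by rw [Set.ncard, hTcard, ENat.toNat_natCast]
      refine eval_coeff_eq_zero_of_degree_lt_ncard hTfin (hT ▸ hrdeg) (fun y hy => ?_) d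
      have hy' : (Set.range (Fin.cons y x : Fin (n + 1) → R)).ncard < m + 1 := by
        rw [Fin.range_cons, Nat.lt_succ_iff, ← hT]
        exact Set.ncard_le_ncard (Set.insert_subset hy hxT) hTfin
      have hdiff := eval_eq_zero_of_mem_vandermondeIdeal hy' hr
      rwa [map_sub, hq _ (hcons hxS (hTS hy)) hy', zero_sub, neg_eq_zero] at hdiff
    simpa using add_mem hr (finSuccEquiv_symm_mem_vandermondeIdeal hcoeff')

end VandermondeIdeal

section StaircaseVandermonde

variable {σ τ R : Type*} [CommRing R] {m : ℕ}

/-- The product of the Vandermonde determinant with its diagonal term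
`X (e 0) ^ 0 * ⋯ * X (e (m - 1)) ^ (m - 1)`. The symmetric functions of degree `m * (m - 1)` in
the Vandermonde ideal are all obtained by symmetrizing it. -/
noncomputable def staircaseVandermonde (R : Type*) [CommRing R] {σ : Type*} {m : ℕ}
    (e : Fin m → σ) : MvPolynomial σ R :=
  (∏ i, X (e i) ^ (i : ℕ)) * vandermonde R e

lemma rename_staircaseVandermonde (f : σ → τ) (e : Fin m → σ) :
    rename f (staircaseVandermonde R e) = staircaseVandermonde R (f ∘ e) := by
  simp only [staircaseVandermonde, map_mul, map_prod, map_pow, rename_X, rename_vandermonde,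
    Function.comp_apply]

lemma sq_vandermonde_eq_sum_perm (e : Fin m → σ) :
    vandermonde R e ^ 2 = ∑ ρ : Perm (Fin m), staircaseVandermonde R (e ∘ ρ) := by
  rw [sq]
  nth_rw 1 [vandermonde_eq_sum_perm]
  simp only [sum_mul, staircaseVandermonde, vandermonde_comp_perm, smul_mul_assoc, mul_smul_comm,
    Function.comp_apply]

end StaircaseVandermonde

section Subdiscriminant

variable {σ R : Type*} [LinearOrder σ] [CommRing R] {m : ℕ}

/-- The discriminant of the variables indexed by `s`. -/
noncomputable def discriminant (R : Type*) [CommRing R] {σ : Type*} [LinearOrder σ]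
    (s : Finset σ) : MvPolynomial σ R :=
  ∏ i ∈ s, ∏ j ∈ s with i < j, (X i - X j) ^ 2

/-- The sum of the discriminants of all `m`-element sets of variables. Evaluated at the eigenvalues
of a matrix of size `n`, it is the `(n - m)`-subdiscriminant of the characteristic polynomial. -/
noncomputable def subdiscriminant (σ R : Type*) [Fintype σ] [LinearOrder σ] [CommRing R] (m : ℕ) :
    MvPolynomial σ R :=
  ∑ s ∈ univ.powersetCard m, discriminant R s

lemma sq_vandermonde_of_strictMono {e : Fin m → σ} (he : StrictMono e) :
    vandermonde R e ^ 2 = discriminant R (univ.image e) := by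
  have hfilter (i : Fin m) : {j ∈ univ.image e | e i < j} = (Ioi i).image e := by
    ext j
    constructor
    · simp only [mem_filter, mem_image, mem_univ, true_and, mem_Ioi]
      rintro ⟨⟨k, rfl⟩, hk⟩
      exact ⟨k, he.lt_iff_lt.mp hk, rfl⟩
    · simp only [mem_filter, mem_image, mem_univ, true_and, mem_Ioi]
      rintro ⟨k, hk, rfl⟩
      exact ⟨⟨k, rfl⟩, he hk⟩
  simp only [vandermonde_eq_prod, discriminant, prod_image he.injective.injOn, hfilter, ← prod_pow]
  exact prod_congr rfl fun i _ => prod_congr rfl fun j _ => by ring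

lemma sq_vandermonde_of_injective {e : Fin m → σ} (he : e.Injective) :
    vandermonde R e ^ 2 = discriminant R (univ.image e) := by
  have hsort : StrictMono (e ∘ Tuple.sort e) :=
    (Tuple.monotone_sort e).strictMono_of_injective (he.comp (Tuple.sort e).injective)
  have himage : univ.image (e ∘ Tuple.sort e) = univ.image e := by
    rw [← image_image, image_univ_equiv]
  rw [← himage, ← sq_vandermonde_of_strictMono hsort, vandermonde_comp_perm, zsmul_eq_mul, mul_pow,
    ← Int.cast_pow, ← Units.val_pow_eq_pow_val, Int.units_sq, Units.val_one, Int.cast_one, one_mul]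

lemma exists_injective_image_eq {s : Finset σ} (hs : #s = m) :
    ∃ e : Fin m → σ, e.Injective ∧ univ.image e = s :=
  ⟨s.orderEmbOfFin hs, (s.orderEmbOfFin hs).injective, s.image_orderEmbOfFin_univ hs⟩

lemma rename_discriminant (π : Perm σ) (s : Finset σ) :
    rename π (discriminant R s) = discriminant R (s.map π.toEmbedding) := by
  obtain ⟨e, he, hs⟩ := exists_injective_image_eq (s := s) rfl
  rw [← hs, ← sq_vandermonde_of_injective he, map_pow, rename_vandermonde,
    sq_vandermonde_of_injective (π.injective.comp he), map_eq_image, image_image]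
  rfl

lemma isSymmetric_subdiscriminant [Fintype σ] : (subdiscriminant σ R m).IsSymmetric := fun π => by
  simp only [subdiscriminant, map_sum, rename_discriminant]
  exact sum_equiv π.finsetCongr (by simp) fun s _ => rfl

lemma eval_subdiscriminant [Fintype σ] (x : σ → R) :
    eval x (subdiscriminant σ R m) =
      ∑ s ∈ univ.powersetCard m, ∏ i ∈ s, ∏ j ∈ s with i < j, (x i - x j) ^ 2 := by
  simp only [subdiscriminant, discriminant, map_sum, map_prod, map_pow, map_sub, eval_X]

end Subdiscriminant

section Symmetrize

variable {σ R : Type*} [Fintype σ] [DecidableEq σ] [CommRing R] {m : ℕ}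

/-- The sum of the images of a polynomial under all permutations of the variables. It is not
divided by the number of permutations. -/
noncomputable def symmetrize : MvPolynomial σ R →ₗ[R] MvPolynomial σ R :=
  ∑ π : Perm σ, (rename π).toLinearMap

lemma symmetrize_apply (p : MvPolynomial σ R) : symmetrize p = ∑ π : Perm σ, rename π p := by
  simp [symmetrize]

lemma symmetrize_rename (π : Perm σ) (p : MvPolynomial σ R) :
    symmetrize (rename π p) = symmetrize p := by
  simp only [symmetrize_apply, rename_rename]
  exact Fintype.sum_equiv (Equiv.mulRight π) _ _ fun _ => rfl

lemma symmetrize_of_isSymmetric {p : MvPolynomial σ R} (hp : p.IsSymmetric) :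
    symmetrize p = (Fintype.card σ)! • p := by
  simp only [symmetrize_apply, hp _, sum_const, card_univ, Fintype.card_perm]

lemma symmetrize_staircaseVandermonde_eq {e e' : Fin m → σ} (he : e.Injective)
    (he' : e'.Injective) :
    symmetrize (staircaseVandermonde R e) = symmetrize (staircaseVandermonde R e') := by
  obtain ⟨π, hπ⟩ := Perm.exists_extending_pair e e' he he'
  have : e' = π ∘ e := funext fun i => (hπ i).symm
  rw [this, ← rename_staircaseVandermonde, symmetrize_rename]

lemma symmetrize_sq_vandermonde {e : Fin m → σ} (he : e.Injective) :
    symmetrize (vandermonde R e ^ 2) = m ! • symmetrize (staircaseVandermonde R e) := by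
  have hperm (ρ : Perm (Fin m)) : symmetrize (staircaseVandermonde R (e ∘ ρ)) =
      symmetrize (staircaseVandermonde R e) :=
    symmetrize_staircaseVandermonde_eq (he.comp ρ.injective) he
  simp only [sq_vandermonde_eq_sum_perm, map_sum, hperm, sum_const, card_univ, Fintype.card_perm,
    Fintype.card_fin]

end Symmetrize

section SymmetrizeVandermondeIdeal

lemma val_le_of_strictMono {m : ℕ} {h : Fin m → ℕ} (hh : StrictMono h) (i : Fin m) :
    (i : ℕ) ≤ h i := by
  simpa using card_le_card_of_injOn h (s := Iio i) (t := range (h i))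
    (fun j hj => by simpa using hh (by simpa using hj)) hh.injective.injOn

lemma exists_perm_forall_apply_eq_val {m : ℕ} {b : Fin m → ℕ} (hb : b.Injective)
    (hsum : ∑ i, b i ≤ ∑ i ∈ range m, i) : ∃ ρ : Perm (Fin m), ∀ i, b (ρ i) = i := by
  have hmono : StrictMono (b ∘ Tuple.sort b) :=
    (Tuple.monotone_sort b).strictMono_of_injective (hb.comp (Tuple.sort b).injective)
  have hle (i : Fin m) (_ : i ∈ univ) : (i : ℕ) ≤ b (Tuple.sort b i) := val_le_of_strictMono hmono i
  have heq : ∑ i : Fin m, (i : ℕ) = ∑ i, b (Tuple.sort b i) := by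
    refine (sum_le_sum hle).antisymm ?_
    rwa [Equiv.sum_comp (Tuple.sort b) b, Fin.sum_univ_eq_sum_range (fun i => i) m]
  exact ⟨Tuple.sort b, fun i => ((sum_eq_sum_iff_of_le hle).mp heq i (mem_univ i)).symm⟩

variable {σ R K : Type*} [CommRing R] [Field K] [CharZero K] {m : ℕ}

lemma exists_perm_monomial_eq_prod [Finite σ] {e : Fin m → σ} (he : e.Injective)
    {a : σ →₀ ℕ} (ha : (a ∘ e).Injective) (hdegree : a.degree = ∑ i ∈ range m, i) :
    ∃ ρ : Perm (Fin m), monomial a (1 : R) = ∏ i, X (e (ρ i)) ^ (i : ℕ) := by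
  classical
  cases nonempty_fintype σ
  have hsplit := sum_add_sum_compl (univ.image e) a
  rw [← Finsupp.degree_eq_sum, sum_image he.injOn, hdegree] at hsplit
  obtain ⟨ρ, hρ⟩ := exists_perm_forall_apply_eq_val ha (by simp only [Function.comp_apply]; omega)
  have hsum : ∑ i, a (e i) = ∑ i ∈ range m, i := by
    rw [← Equiv.sum_comp ρ, ← Fin.sum_univ_eq_sum_range (fun i => i) m]
    exact sum_congr rfl fun i _ => hρ i
  have hzero : ∀ v ∈ (univ.image e)ᶜ, a v = 0 := by rw [← sum_eq_zero_iff]; omega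
  refine ⟨ρ, ?_⟩
  calc monomial a (1 : R)
      = ∏ v, X v ^ a v := by rw [monomial_eq, C_1, one_mul, Finsupp.prod_fintype _ _ (by simp)]
    _ = ∏ v ∈ univ.image e, X v ^ a v :=
        (prod_subset (subset_univ _) fun v _ hv => by simp [hzero v (mem_compl.mpr hv)]).symm
    _ = ∏ i, X (e i) ^ a (e i) := prod_image he.injOn
    _ = ∏ i, X (e (ρ i)) ^ (i : ℕ) := by
        rw [← Equiv.prod_comp ρ]
        exact prod_congr rfl fun i _ => congrArg _ (hρ i)

lemma symmetrize_monomial_mul_vandermonde_eq_zero [Fintype σ] [DecidableEq σ] [IsDomain R]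
    [CharZero R] {e : Fin m → σ} (he : e.Injective) {a : σ →₀ ℕ} (ha : ¬ (a ∘ e).Injective)
    (c : R) :
    symmetrize (monomial a c * vandermonde R e) = 0 := by
  obtain ⟨i, j, hij, hne⟩ := Function.not_injective_iff.mp ha
  have hmonomial : rename (swap (e i) (e j)) (monomial a c) = monomial a c := by
    rw [rename_monomial]
    congr
    ext v
    rw [Finsupp.mapDomain_equiv_apply, symm_swap, apply_swap_eq_self (v := a) hij]
  have hvandermonde : rename (swap (e i) (e j)) (vandermonde R e) = -vandermonde R e := by
    rw [rename_vandermonde, he.swap_comp, vandermonde_comp_perm, Perm.sign_swap hne]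
    simp
  have hneg := symmetrize_rename (swap (e i) (e j)) (monomial a c * vandermonde R e)
  rw [map_mul, hmonomial, hvandermonde, mul_neg, map_neg] at hneg
  exact self_eq_neg.mp hneg.symm

lemma homogeneousComponent_mul_of_isHomogeneous (p : MvPolynomial σ R)
    {q : MvPolynomial σ R} {i j : ℕ} (hq : q.IsHomogeneous j) :
    homogeneousComponent (i + j) (p * q) = homogeneousComponent i p * q := by
  let : GradedAlgebra (homogeneousSubmodule σ R) := gradedAlgebra
  rw [← decomposition.decompose'_apply, ← decomposition.decompose'_apply]
  exact DirectSum.coe_decompose_mul_add_of_right_mem (homogeneousSubmodule σ R) hq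

variable [Fintype σ] [LinearOrder σ]

lemma symmetrize_subdiscriminant {e : Fin m → σ} (he : e.Injective) :
    symmetrize (subdiscriminant σ R m) =
      ((Fintype.card σ).choose m * m !) • symmetrize (staircaseVandermonde R e) := by
  have hdiscriminant : ∀ s ∈ (univ : Finset σ).powersetCard m, symmetrize (discriminant R s) =
      m ! • symmetrize (staircaseVandermonde R e) := fun s hs => by
    obtain ⟨e', he', hs'⟩ := exists_injective_image_eq (mem_powersetCard.mp hs).2
    rw [← hs', ← sq_vandermonde_of_injective he', symmetrize_sq_vandermonde he',
      symmetrize_staircaseVandermonde_eq he' he]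
  rw [subdiscriminant, map_sum, sum_congr rfl hdiscriminant, sum_const, card_powersetCard,
    card_univ, mul_smul]

lemma symmetrize_staircaseVandermonde_mem_span {e : Fin m → σ} (he : e.Injective) :
    symmetrize (staircaseVandermonde K e) ∈ Submodule.span K {subdiscriminant σ K m} := by
  have hcoeff : (((Fintype.card σ).choose m * m ! : ℕ) : K) ≠ 0 :=
    Nat.cast_ne_zero.mpr <| mul_ne_zero
      (Nat.choose_ne_zero (by simpa using Fintype.card_le_of_injective e he)) m.factorial_ne_zero
  have heq := symmetrize_subdiscriminant (R := K) he
  rw [symmetrize_of_isSymmetric isSymmetric_subdiscriminant, ← Nat.cast_smul_eq_nsmul K,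
    ← Nat.cast_smul_eq_nsmul K] at heq
  rw [← Submodule.smul_mem_iff _ hcoeff, ← heq]
  exact Submodule.smul_mem _ _ (Submodule.mem_span_singleton_self _)

lemma symmetrize_monomial_mul_vandermonde_mem_span (e : Fin m → σ) {a : σ →₀ ℕ}
    (hdegree : a.degree = ∑ i ∈ range m, i) (c : K) :
    symmetrize (monomial a c * vandermonde K e) ∈ Submodule.span K {subdiscriminant σ K m} := by
  by_cases he : e.Injective
  swap
  · simp [vandermonde_eq_zero he]
  by_cases ha : (a ∘ e).Injective
  swap
  · simp [symmetrize_monomial_mul_vandermonde_eq_zero he ha]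
  obtain ⟨ρ, hρ⟩ := exists_perm_monomial_eq_prod (R := K) he ha hdegree
  have hstaircase : monomial a c * vandermonde K e =
      c • (Perm.sign ρ : ℤ) • staircaseVandermonde K (e ∘ ρ) := by
    simp only [staircaseVandermonde, Function.comp_apply, ← hρ, vandermonde_comp_perm,
      mul_smul_comm, smul_smul, Int.units_coe_mul_self, one_smul, ← smul_mul_assoc, smul_monomial,
      smul_eq_mul, mul_one]
  rw [hstaircase, map_smul, map_zsmul]
  exact Submodule.smul_mem _ _
    (zsmul_mem (symmetrize_staircaseVandermonde_mem_span (he.comp ρ.injective)) _)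

lemma symmetrize_mul_vandermonde_mem_span (e : Fin m → σ) {p : MvPolynomial σ K}
    (hp : p.IsHomogeneous (∑ i ∈ range m, i)) :
    symmetrize (p * vandermonde K e) ∈ Submodule.span K {subdiscriminant σ K m} := by
  rw [p.as_sum, sum_mul, map_sum]
  exact Submodule.sum_mem _ fun a ha => symmetrize_monomial_mul_vandermonde_mem_span e
    (hp.degree_eq_sum_deg_support ha).symm _

lemma mem_span_subdiscriminant {p : MvPolynomial σ K} (hsymm : p.IsSymmetric)
    (hp : p.IsHomogeneous (m * (m - 1))) (hmem : p ∈ vandermondeIdeal σ K m) :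
    p ∈ Submodule.span K {subdiscriminant σ K m} := by
  obtain ⟨c, hc⟩ := Ideal.mem_span_range_iff_exists_fun.mp hmem
  have hcard : ((Fintype.card σ)! : K) ≠ 0 := Nat.cast_ne_zero.mpr (Nat.factorial_ne_zero _)
  rw [← sum_range_id_mul_two, mul_two] at hp
  rw [← Submodule.smul_mem_iff _ hcard, Nat.cast_smul_eq_nsmul, ← symmetrize_of_isSymmetric hsymm,
    ← homogeneousComponent_eq_self hp, ← hc, map_sum, map_sum]
  refine Submodule.sum_mem _ fun e _ => ?_
  rw [homogeneousComponent_mul_of_isHomogeneous _ (isHomogeneous_vandermonde e)]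
  exact symmetrize_mul_vandermonde_mem_span e (homogeneousComponent_isHomogeneous _ _)

end SymmetrizeVandermondeIdeal

section Matrix

open scoped Matrix

variable {ι R : Type*}

lemma funext_ofReal {σ : Type*} {p q : MvPolynomial σ ℂ}
    (h : ∀ x : σ → ℝ, eval (fun i => (x i : ℂ)) p = eval (fun i => (x i : ℂ)) q) : p = q := by
  refine funext_set (fun _ => Set.range ((↑) : ℝ → ℂ))
    (fun _ => Set.infinite_range_of_injective Complex.ofReal_injective) fun x hx => ?_
  choose y hy using fun i => hx i (Set.mem_univ i)
  obtain rfl : (fun i => (y i : ℂ)) = x := funext hy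
  exact h y

lemma mem_vandermondeIdeal_of_forall_eval_ofReal_eq_zero {n m : ℕ} {q : MvPolynomial (Fin n) ℂ}
    (hq : ∀ x : Fin n → ℝ, (Set.range fun i => (x i : ℂ)).ncard < m →
      eval (fun i => (x i : ℂ)) q = 0) :
    q ∈ vandermondeIdeal (Fin n) ℂ m := by
  refine mem_vandermondeIdeal_of_forall_eval_eq_zero
    (Set.infinite_range_of_injective Complex.ofReal_injective) fun x hxS hx => ?_
  choose y hy using hxS
  obtain rfl : (fun i => (y i : ℂ)) = x := funext hy
  exact hq y hx

lemma not_linearIndependent_pow_of_aeval_eq_zero {A : Type*} [CommRing R] [Ring A] [Algebra R A]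
    {a : A} {P : Polynomial R} (hP : P ≠ 0) (ha : Polynomial.aeval a P = 0) {m : ℕ}
    (hdegree : P.natDegree < m) :
    ¬ LinearIndependent R fun r : Fin m => a ^ (r : ℕ) := fun hli => by
  rw [Polynomial.aeval_eq_sum_range' hdegree,
    ← Fin.sum_univ_eq_sum_range fun i => P.coeff i • a ^ i] at ha
  exact Polynomial.leadingCoeff_ne_zero.mpr hP
    (Fintype.linearIndependent_iff.mp hli _ ha ⟨P.natDegree, hdegree⟩)

variable [DecidableEq ι]

/-- The restriction of a polynomial function of the matrix entries to diagonal matrices. -/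
noncomputable def diagonalRestriction [CommRing R] (f : MvPolynomial (ι × ι) R) :
    MvPolynomial ι R :=
  aeval (fun p => (Matrix.diagonal X : Matrix ι ι (MvPolynomial ι R)) p.1 p.2) f

lemma eval_diagonalRestriction [CommRing R] (f : MvPolynomial (ι × ι) R) (x : ι → R) :
    eval x (diagonalRestriction f) = eval (fun p => Matrix.diagonal x p.1 p.2) f := by
  refine (map_aeval _ _ _).trans
    (eval₂Hom_congr (RingHom.ext fun c => ?_) (funext fun p => ?_) rfl)
  · simp
  · simp only [Matrix.diagonal_apply, apply_ite (eval x), eval_X, map_zero]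

lemma isHomogeneous_diagonalRestriction [CommRing R] {f : MvPolynomial (ι × ι) R} {d : ℕ}
    (hf : f.IsHomogeneous d) : (diagonalRestriction f).IsHomogeneous d := by
  rw [← one_mul d]
  refine hf.aeval _ fun p => ?_
  rw [Matrix.diagonal_apply]
  split_ifs
  exacts [isHomogeneous_X _ _, isHomogeneous_zero _ _ _]

lemma isHermitian_diagonal_ofReal (x : ι → ℝ) :
    (Matrix.diagonal fun i => (x i : ℂ)).IsHermitian :=
  Matrix.isHermitian_diagonal_of_self_adjoint _ (funext fun i => Complex.conj_ofReal (x i))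

variable [Fintype ι]

lemma not_linearIndependent_diagonal_pow [CommRing R] [Nontrivial R] {x : ι → R} {m : ℕ}
    (hx : (Set.range x).ncard < m) :
    ¬ LinearIndependent R fun r : Fin m => Matrix.diagonal x ^ (r : ℕ) := by
  classical
  let P : Polynomial R := ∏ v ∈ univ.image x, (Polynomial.X - Polynomial.C v)
  have hmonic : P.Monic := Polynomial.monic_prod_X_sub_C _ _
  have hroot : Polynomial.aeval x P = 0 := by
    rw [Polynomial.aeval_pi_apply]
    refine funext fun i => ?_
    rw [map_prod]
    exact prod_eq_zero (mem_image_of_mem x (mem_univ i)) (by simp)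
  refine not_linearIndependent_pow_of_aeval_eq_zero hmonic.ne_zero ?_ (a := Matrix.diagonal x) ?_
  · exact (Polynomial.aeval_algHom_apply (Matrix.diagonalAlgHom R) x P).trans
      (by rw [hroot, map_zero])
  · rwa [Polynomial.natDegree_finsetProd_X_sub_C_eq_card, ← Set.ncard_coe_finset, coe_image,
      coe_univ, Set.image_univ]

/-- Invariance, on Hermitian matrices, of the polynomial function `f` of the matrix entries under
conjugation by unitary matrices. -/
def IsUnitarilyInvariant (f : MvPolynomial (ι × ι) ℂ) : Prop :=
  ∀ u ∈ Matrix.unitaryGroup ι ℂ, ∀ A : Matrix ι ι ℂ, A.IsHermitian →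
    eval (fun p => (u * A * uᴴ) p.1 p.2) f = eval (fun p => A p.1 p.2) f

lemma exists_smul_mem_specialUnitaryGroup [Nonempty ι] {u : Matrix ι ι ℂ}
    (hu : u ∈ Matrix.unitaryGroup ι ℂ) :
    ∃ z : ℂ, z * star z = 1 ∧ z • u ∈ Matrix.specialUnitaryGroup ι ℂ := by
  obtain ⟨z, hz⟩ := IsAlgClosed.exists_pow_nat_eq (star u.det) (Fintype.card_pos (α := ι))
  have hdet : u.det * star u.det = 1 := (Unitary.mem_iff.mp (Matrix.det_of_mem_unitary hu)).2
  have hnorm : ‖z‖ = 1 := by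
    have hpow : ‖z‖ ^ Fintype.card ι = 1 := by
      rw [← norm_pow, hz, norm_star]
      exact CStarRing.norm_of_mem_unitary (Matrix.det_of_mem_unitary hu)
    exact (pow_eq_one_iff_of_nonneg (norm_nonneg z) Fintype.card_ne_zero).mp hpow
  have hunit : z * star z = 1 := by
    simpa [hnorm] using Complex.mul_conj' z
  refine ⟨z, hunit, Matrix.mem_specialUnitaryGroup_iff.mpr ⟨?_, ?_⟩⟩
  · rw [Matrix.mem_unitaryGroup_iff, star_smul, smul_mul_smul_comm, hunit, one_smul,
      Matrix.mem_unitaryGroup_iff.mp hu]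
  · rw [Matrix.det_smul, hz, mul_comm, hdet]

lemma isUnitarilyInvariant_of_specialUnitary [Nonempty ι] {f : MvPolynomial (ι × ι) ℂ}
    (hf : ∀ g ∈ Matrix.specialUnitaryGroup ι ℂ, ∀ A : Matrix ι ι ℂ, A.IsHermitian →
      eval (fun p => (g * A * gᴴ) p.1 p.2) f = eval (fun p => A p.1 p.2) f) :
    IsUnitarilyInvariant f := fun u hu A hA => by
  obtain ⟨z, hz, hzu⟩ := exists_smul_mem_specialUnitaryGroup hu
  have hconj : z • u * A * (z • u)ᴴ = u * A * uᴴ := by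
    rw [Matrix.conjTranspose_smul, smul_mul_assoc, smul_mul_smul_comm, hz, one_smul]
  rw [← hconj, hf _ hzu A hA]

lemma IsUnitarilyInvariant.isSymmetric_diagonalRestriction {f : MvPolynomial (ι × ι) ℂ}
    (hf : IsUnitarilyInvariant f) :
    (diagonalRestriction f).IsSymmetric := fun π => funext_ofReal fun x => by
  have hunitary : π.permMatrix ℂ ∈ Matrix.unitaryGroup ι ℂ := by
    rw [Matrix.mem_unitaryGroup_iff, Matrix.star_eq_conjTranspose, Matrix.conjTranspose_permMatrix,
      ← Matrix.permMatrix_mul, inv_mul_cancel, Matrix.permMatrix_one]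
  have hconj : π.permMatrix ℂ * Matrix.diagonal (fun i => (x i : ℂ)) * (π.permMatrix ℂ)ᴴ =
      Matrix.diagonal ((fun i => (x i : ℂ)) ∘ π) := by
    rw [Matrix.conjTranspose_permMatrix, PEquiv.toMatrix_toPEquiv_mul,
      PEquiv.mul_toMatrix_toPEquiv, Matrix.submatrix_submatrix]
    exact Matrix.submatrix_diagonal_equiv _ π
  rw [eval_rename, eval_diagonalRestriction, eval_diagonalRestriction, ← hconj,
    hf _ hunitary _ (isHermitian_diagonal_ofReal x)]

lemma IsUnitarilyInvariant.eval_eq_eval_eigenvalues {f : MvPolynomial (ι × ι) ℂ}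
    (hf : IsUnitarilyInvariant f) {A : Matrix ι ι ℂ} (hA : A.IsHermitian) :
    eval (fun p => A p.1 p.2) f =
      eval (fun i => (hA.eigenvalues i : ℂ)) (diagonalRestriction f) := by
  have hspectral : A = hA.eigenvectorUnitary * Matrix.diagonal (fun i => (hA.eigenvalues i : ℂ)) *
      (hA.eigenvectorUnitary : Matrix ι ι ℂ)ᴴ := hA.spectral_theorem
  rw [eval_diagonalRestriction, ← hf _ hA.eigenvectorUnitary.2 _ (isHermitian_diagonal_ofReal _),
    ← hspectral]

end Matrix

end Subdiscriminant

open Subdiscriminant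

/-- For `n ≥ 2`, `0 ≤ k ≤ n-2`: a homogeneous `SU(n)`-invariant polynomial of degree
exactly `(n-k)(n-k-1)` vanishing on all Hermitian matrices with at most `n-k-1`
distinct eigenvalues agrees on Hermitian matrices with a scalar multiple of the
`k`-subdiscriminant. -/
theorem stmt_15 (n k : ℕ) (hn : 2 ≤ n) (hk : k ≤ n - 2)
    (f : MvPolynomial (Fin n × Fin n) ℂ)
    (hf : f.IsHomogeneous ((n - k) * (n - k - 1)))
    (hinv : ∀ g : Matrix (Fin n) (Fin n) ℂ, g * g.conjTranspose = 1 → g.det = 1 →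
      ∀ A : Matrix (Fin n) (Fin n) ℂ, A.IsHermitian →
        MvPolynomial.eval (fun p => (g * A * g.conjTranspose) p.1 p.2) f =
          MvPolynomial.eval (fun p => A p.1 p.2) f)
    (hvan : ∀ A : Matrix (Fin n) (Fin n) ℂ, A.IsHermitian →
      ¬ LinearIndependent ℂ (fun r : Fin (n - k) => A ^ (r : ℕ)) →
      MvPolynomial.eval (fun p => A p.1 p.2) f = 0) :
    ∃ c : ℂ, ∀ A : Matrix (Fin n) (Fin n) ℂ, ∀ hA : A.IsHermitian,
      MvPolynomial.eval (fun p => A p.1 p.2) f =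
        c * ∑ s ∈ Finset.univ.powersetCard (n - k),
          ∏ i ∈ s, ∏ j ∈ s.filter (fun j => i < j),
            ((hA.eigenvalues i : ℂ) - (hA.eigenvalues j : ℂ)) ^ 2 := by
  have : Nonempty (Fin n) := ⟨⟨0, by omega⟩⟩
  have hunitary : IsUnitarilyInvariant f := isUnitarilyInvariant_of_specialUnitary fun g hg =>
    hinv g (Matrix.mem_unitaryGroup_iff.mp hg.1) hg.2
  have hmem : diagonalRestriction f ∈ vandermondeIdeal (Fin n) ℂ (n - k) := by
    refine mem_vandermondeIdeal_of_forall_eval_ofReal_eq_zero fun x hx => ?_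
    rw [eval_diagonalRestriction]
    exact hvan _ (isHermitian_diagonal_ofReal x) (not_linearIndependent_diagonal_pow hx)
  obtain ⟨c, hc⟩ := Submodule.mem_span_singleton.mp <| mem_span_subdiscriminant
    hunitary.isSymmetric_diagonalRestriction (isHomogeneous_diagonalRestriction hf) hmem
  refine ⟨c, fun A hA => ?_⟩
  rw [hunitary.eval_eq_eval_eigenvalues hA, ← hc, MvPolynomial.smul_eval, eval_subdiscriminant]
end

section
/- Let n ≥ 3 and 0 ≤ k ≤ n−3, and set N = binom(2n−k−1, n) · binom(n−1, k) (the dimension of the irreducible SL(n,ℂ)-module with highest weight (n−k, 1^k), given by the Weyl dimension formula). There exist polynomials q₁, …, q_N ∈ MvPolynomial (Fin n × Fin n) ℂ such that for every Hermitian matrix A ∈ Matrix (Fin n) (Fin n) ℂ with eigenvalues λ₁(A), …, λ_n(A) (listed with multiplicity): Σ_{1≤i₁<⋯<i_{n−k}≤n} ∏_{1≤s<t≤n−k} (λ_{i_s}(A) − λ_{i_t}(A))² = Σ_{m=1}^{N} ‖q_m(A)‖². Equivalently, the k-subdiscriminant of Hermitian n×n matrices is a sum of 2N squares of real polynomial functions.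 -/
/-!
Put `d = n - k`. The covariant `x ↦ x ∧ A x ∧ ⋯ ∧ A ^ (d - 1) x` of a matrix `A` is an element of
`Sym ^ d ⊗ Λ ^ d` whose coordinates are polynomials in the entries of `A`. It is equivariant under
conjugation, so for Hermitian `A` its norm can be computed after diagonalizing `A`, where its
coordinates are Vandermonde determinants of eigenvalues: the squared norm of the full tensor is
`d! ^ 2` times the subdiscriminant. This writes the subdiscriminant as a sum of far too many
squares. But the covariant is killed by wedging with `x`, so it lies in the kernel of a Koszul
differential. An element of that kernel is determined by those coefficients `x_m x ^ β ⊗ e_J` for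
which `m` lies in `J`, below the other variables of `β` and below the complement of `J`; there are
`N` of these, so an orthonormal basis of the kernel expresses the norm by `N` squares.
-/

section Tuples

open Finset

theorem exists_perm_eq_comp_of_range_eq {α β : Type*} {f g : α → β} (hf : f.Injective)
    (hg : g.Injective) (h : Set.range f = Set.range g) : ∃ σ : Equiv.Perm α, g = f ∘ σ := by
  refine ⟨(Equiv.ofInjective g hg).trans
    ((Equiv.setCongr h.symm).trans (Equiv.ofInjective f hf).symm), funext fun s => ?_⟩
  simp [Equiv.apply_ofInjective_symm hf]

theorem card_filter_injective_image_eq {ι : Type*} [Fintype ι] [DecidableEq ι] {d : ℕ}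
    {s : Finset ι} (hs : #s = d) :
    #{a : Fin d → ι | a.Injective ∧ univ.image a = s} = d.factorial := by
  obtain ⟨e⟩ : Nonempty (Fin d ≃ s) := by simp [← Fintype.card_eq, hs]
  have he : Function.Injective (Subtype.val ∘ e) := Subtype.val_injective.comp e.injective
  have hrange : Set.range (Subtype.val ∘ e) = s := by simp [Set.range_comp]
  have himage : ({a | a.Injective ∧ univ.image a = s} : Finset (Fin d → ι)) =
      univ.image fun σ : Equiv.Perm (Fin d) => (Subtype.val ∘ e) ∘ σ := by
    ext a
    simp only [mem_filter_univ, mem_image, mem_univ, true_and]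
    constructor
    · rintro ⟨ha, rfl⟩
      obtain ⟨σ, hσ⟩ := exists_perm_eq_comp_of_range_eq he ha (by simp [hrange])
      exact ⟨σ, hσ.symm⟩
    · rintro ⟨σ, rfl⟩
      refine ⟨he.comp σ.injective, coe_injective ?_⟩
      rw [coe_image, coe_univ, Set.image_univ, EquivLike.range_comp, hrange]
  rw [himage, card_image_of_injective _
    fun σ τ h => Equiv.coe_fn_injective (he.comp_left h), card_univ, Fintype.card_perm,
    Fintype.card_fin]

theorem sum_tuple_eq_factorial_nsmul {ι M : Type*} [Fintype ι] [DecidableEq ι] [AddCommMonoid M]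
    {d : ℕ} {f : (Fin d → ι) → M} {F : Finset ι → M} (hf : ∀ a, ¬ a.Injective → f a = 0)
    (hF : ∀ a, a.Injective → f a = F (univ.image a)) :
    ∑ a, f a = d.factorial • ∑ s ∈ univ.powersetCard d, F s := by
  have hmaps : ∀ a ∈ ({a | a.Injective} : Finset (Fin d → ι)),
      univ.image a ∈ (univ : Finset ι).powersetCard d := fun a ha => by
    simp [mem_powersetCard, card_image_of_injective _ (mem_filter_univ _ |>.mp ha)]
  rw [← sum_filter_of_ne fun a _ ha => not_not.mp (mt (hf a) ha),
    ← sum_fiberwise_of_maps_to hmaps, smul_sum]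
  refine sum_congr rfl fun s hs => ?_
  rw [filter_filter, ← card_filter_injective_image_eq (mem_powersetCard.mp hs).2]
  refine sum_eq_card_nsmul fun a ha => ?_
  obtain ⟨hinj, rfl⟩ := mem_filter_univ _ |>.mp ha
  exact hF a hinj

theorem det_vandermonde_comp_sq {R ι : Type*} [CommRing R] [LinearOrder ι] {d : ℕ} (l : ι → R)
    {a : Fin d → ι} (ha : a.Injective) :
    (Matrix.vandermonde (l ∘ a)).det ^ 2 =
      ∏ i ∈ univ.image a, ∏ j ∈ univ.image a with i < j, (l i - l j) ^ 2 := by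
  set s := univ.image a
  have hs : #s = d := by simp [s, card_image_of_injective _ ha]
  set b := s.orderEmbOfFin hs
  obtain ⟨σ, hσ⟩ : ∃ σ : Equiv.Perm (Fin d), a = b ∘ σ :=
    exists_perm_eq_comp_of_range_eq b.injective ha (by simp [b, s])
  have hperm : Matrix.vandermonde (l ∘ a) = (Matrix.vandermonde (l ∘ b)).submatrix σ id := by
    ext i j; simp [Matrix.vandermonde_apply, hσ]
  have hsign : ((Equiv.Perm.sign σ : ℤ) : R) ^ 2 = 1 := by
    rw [← Int.cast_pow, ← Units.val_pow_eq_pow_val, Int.units_sq, Units.val_one, Int.cast_one]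
  have hmap : s = univ.map b.toEmbedding := by simp [b]
  rw [hperm, Matrix.det_permute, mul_pow, hsign, one_mul, Matrix.det_vandermonde, hmap, prod_map,
    ← prod_pow]
  refine prod_congr rfl fun i _ => ?_
  rw [filter_map, prod_map, ← prod_pow]
  refine prod_congr (by ext j; simp) fun j _ => ?_
  simp only [Function.comp, RelEmbedding.coe_toEmbedding]
  ring

theorem det_vandermonde_comp_eq_zero {R ι : Type*} [CommRing R] {d : ℕ} (l : ι → R)
    {a : Fin d → ι} (ha : ¬ a.Injective) : (Matrix.vandermonde (l ∘ a)).det = 0 := by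
  obtain ⟨i, j, hij, hne⟩ := Function.not_injective_iff.mp ha
  exact Matrix.det_zero_of_row_eq hne (funext fun s => by simp [Matrix.vandermonde_apply, hij])

theorem sum_det_vandermonde_comp_sq {R ι : Type*} [CommRing R] [Fintype ι] [LinearOrder ι] (d : ℕ)
    (l : ι → R) :
    ∑ a : Fin d → ι, (Matrix.vandermonde (l ∘ a)).det ^ 2 =
      d.factorial * ∑ s ∈ univ.powersetCard d, ∏ i ∈ s, ∏ j ∈ s with i < j, (l i - l j) ^ 2 := by
  rw [← nsmul_eq_mul]
  exact sum_tuple_eq_factorial_nsmul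
    (fun a ha => by rw [det_vandermonde_comp_eq_zero l ha, zero_pow two_ne_zero])
    (fun a ha => det_vandermonde_comp_sq l ha)

end Tuples

section PiKronecker

variable {R κ ι : Type*} [CommSemiring R] [Fintype κ]

/-- The Kronecker product of a finite family of matrices, indexed by tuples: the matrix of the
tensor product of the corresponding endomorphisms in the tensor power of the standard basis. -/
def piKronecker (M : κ → Matrix ι ι R) : Matrix (κ → ι) (κ → ι) R :=
  Matrix.of fun a b => ∏ s, M s (a s) (b s)

theorem piKronecker_apply (M : κ → Matrix ι ι R) (a b : κ → ι) :
    piKronecker M a b = ∏ s, M s (a s) (b s) := rfl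

theorem piKronecker_submatrix_perm (M : Matrix ι ι R) (σ : Equiv.Perm κ) :
    (piKronecker fun _ => M).submatrix (· ∘ σ) (· ∘ σ) = piKronecker fun _ => M := by
  ext a b
  exact Equiv.prod_comp σ fun s => M (a s) (b s)

theorem piKronecker_conjTranspose [StarRing R] (M : κ → Matrix ι ι R) :
    (piKronecker M).conjTranspose = piKronecker fun s => (M s).conjTranspose := by
  ext a b
  simp [piKronecker_apply, Matrix.conjTranspose_apply]

theorem piKronecker_mul [DecidableEq κ] [Fintype ι] (M M' : κ → Matrix ι ι R) :
    piKronecker M * piKronecker M' = piKronecker fun s => M s * M' s := by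
  ext a b
  simp only [piKronecker_apply, Matrix.mul_apply, Finset.prod_univ_sum, Fintype.piFinset_univ,
    Finset.prod_mul_distrib]

theorem piKronecker_one [DecidableEq ι] :
    piKronecker (fun _ : κ => (1 : Matrix ι ι R)) = 1 := by
  ext a b
  simp [piKronecker_apply, Matrix.one_apply, Finset.prod_ite_zero, funext_iff]

theorem piKronecker_mem_unitaryGroup {R κ ι : Type*} [CommRing R] [StarRing R] [Fintype κ]
    [DecidableEq κ] [Fintype ι] [DecidableEq ι] {U : κ → Matrix ι ι R}
    (hU : ∀ s, U s ∈ Matrix.unitaryGroup ι R) :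
    piKronecker U ∈ Matrix.unitaryGroup (κ → ι) R := by
  rw [Matrix.mem_unitaryGroup_iff, Matrix.star_eq_conjTranspose, piKronecker_conjTranspose,
    piKronecker_mul]
  simp only [← Matrix.star_eq_conjTranspose, Matrix.mem_unitaryGroup_iff.mp (hU _),
    piKronecker_one]

end PiKronecker

section KrylovTensor

open Finset Matrix

variable {R ι : Type*} [CommRing R] [Fintype ι] [DecidableEq ι] {d : ℕ}

/-- The coordinate at `a` of the multivector `e (c 0) ∧ A e (c 1) ∧ ⋯ ∧ A ^ (d - 1) e (c (d - 1))`,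
where `e` is the standard basis. -/
def krylovMinor (A : Matrix ι ι R) (a c : Fin d → ι) : R :=
  det (of fun r s : Fin d => (A ^ (s : ℕ)) (a r) (c s))

theorem krylovMinor_map {S : Type*} [CommRing S] (f : R →+* S) (A : Matrix ι ι R)
    (a c : Fin d → ι) : krylovMinor (f.mapMatrix A) a c = f (krylovMinor A a c) := by
  simp only [krylovMinor, f.map_det, ← map_pow]
  rfl

theorem krylovMinor_eq_sum_perm (A : Matrix ι ι R) (a c : Fin d → ι) :
    krylovMinor A a c = ∑ σ : Equiv.Perm (Fin d), Equiv.Perm.sign σ •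
      piKronecker (fun s : Fin d => A ^ (s : ℕ)) (a ∘ σ) c := by
  simp only [krylovMinor, det_apply, of_apply, piKronecker_apply, Function.comp_apply]

/-- The coordinate tensor of the covariant `x ↦ x ∧ A x ∧ ⋯ ∧ A ^ (d - 1) x`, polarized in `x`:
the row index runs over the coordinates of the exterior power and the column index over those of
the symmetric power. -/
def krylovTensor (d : ℕ) (A : Matrix ι ι R) : Matrix (Fin d → ι) (Fin d → ι) R :=
  of fun a b => ∑ τ : Equiv.Perm (Fin d), krylovMinor A a (b ∘ τ)

theorem krylovTensor_apply (A : Matrix ι ι R) (a b : Fin d → ι) :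
    krylovTensor d A a b = ∑ τ : Equiv.Perm (Fin d), krylovMinor A a (b ∘ τ) := rfl

theorem krylovTensor_map {S : Type*} [CommRing S] (f : R →+* S) (A : Matrix ι ι R)
    (a b : Fin d → ι) : krylovTensor d (f.mapMatrix A) a b = f (krylovTensor d A a b) := by
  simp only [krylovTensor_apply, map_sum, krylovMinor_map]

theorem krylovTensor_eq_sum_submatrix (A : Matrix ι ι R) :
    krylovTensor d A = ∑ τ : Equiv.Perm (Fin d), ∑ σ : Equiv.Perm (Fin d), Equiv.Perm.sign σ •
      (piKronecker fun s : Fin d => A ^ (s : ℕ)).submatrix (· ∘ σ) (· ∘ τ) := by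
  ext a b
  simp only [krylovTensor_apply, krylovMinor_eq_sum_perm, Matrix.sum_apply, Matrix.smul_apply,
    submatrix_apply]

theorem krylovTensor_conj (u : (Matrix ι ι R)ˣ) (A : Matrix ι ι R) :
    krylovTensor d ((u : Matrix ι ι R) * A * (↑u⁻¹ : Matrix ι ι R)) =
      piKronecker (fun _ => (u : Matrix ι ι R)) * krylovTensor d A *
        piKronecker (fun _ => (↑u⁻¹ : Matrix ι ι R)) := by
  have hbij (σ : Equiv.Perm (Fin d)) : Function.Bijective fun a : Fin d → ι => a ∘ σ :=
    (Equiv.arrowCongr σ.symm (Equiv.refl ι)).bijective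
  simp only [krylovTensor_eq_sum_submatrix, mul_sum, sum_mul, Matrix.mul_smul, Matrix.smul_mul]
  refine sum_congr rfl fun τ _ => sum_congr rfl fun σ _ => ?_
  simp only [Units.conj_pow, ← piKronecker_mul]
  rw [submatrix_mul _ _ _ (· ∘ τ) _ (hbij τ), submatrix_mul _ _ _ (· ∘ σ) _ (hbij σ),
    piKronecker_submatrix_perm, piKronecker_submatrix_perm]

theorem krylovTensor_diagonal (l : ι → R) (a b : Fin d → ι) :
    krylovTensor d (diagonal l) a b =
      det (vandermonde (l ∘ a)) * #{ρ : Equiv.Perm (Fin d) | a ∘ ρ = b} := by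
  have hentry (σ τ : Equiv.Perm (Fin d)) :
      piKronecker (fun s : Fin d => diagonal l ^ (s : ℕ)) (a ∘ σ) (b ∘ τ) =
        (∏ s : Fin d, l (a (σ s)) ^ (s : ℕ)) * if a ∘ σ = b ∘ τ then 1 else 0 := by
    simp [piKronecker_apply, diagonal_pow, diagonal_apply, prod_ite_zero, funext_iff]
  have hcount (σ : Equiv.Perm (Fin d)) :
      ∑ τ : Equiv.Perm (Fin d), (if a ∘ σ = b ∘ τ then 1 else 0 : R) =
        #{ρ : Equiv.Perm (Fin d) | a ∘ ρ = b} := by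
    rw [← sum_boole]
    refine Fintype.sum_equiv ((Equiv.inv _).trans (Equiv.mulLeft σ)) _ _ fun τ => ?_
    simp [← Equiv.comp_symm_eq, Function.comp_assoc]
  simp only [krylovTensor_apply, krylovMinor_eq_sum_perm, hentry]
  rw [sum_comm]
  simp only [← mul_sum, hcount, ← smul_mul_assoc, ← sum_mul, det_apply,
    vandermonde_apply, Function.comp_apply]

theorem sum_sq_card_filter_comp_perm_eq {α β : Type*} [Fintype α] [DecidableEq α] [Fintype β]
    [DecidableEq β] {a : α → β} (ha : a.Injective) :
    ∑ b, #{ρ : Equiv.Perm α | a ∘ ρ = b} ^ 2 = (Fintype.card α).factorial := by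
  have hle (b : α → β) : #{ρ : Equiv.Perm α | a ∘ ρ = b} ≤ 1 :=
    card_le_one.mpr fun ρ hρ τ hτ => Equiv.coe_fn_injective <| ha.comp_left <|
      ((mem_filter_univ _).mp hρ).trans ((mem_filter_univ _).mp hτ).symm
  have hsq (b : α → β) :
      #{ρ : Equiv.Perm α | a ∘ ρ = b} ^ 2 = #{ρ : Equiv.Perm α | a ∘ ρ = b} := by
    rcases Nat.le_one_iff_eq_zero_or_eq_one.mp (hle b) with h | h <;> simp only [h] <;> norm_num
  simp only [hsq]
  rw [← card_eq_sum_card_fiberwise fun _ _ => mem_coe.mpr (mem_univ _), card_univ,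
    Fintype.card_perm]

end KrylovTensor

section UnitaryInvariance

open Finset Matrix

variable {𝕜 : Type*} [RCLike 𝕜]

theorem sum_sum_norm_sq_eq_trace {m n : Type*} [Fintype m] [Fintype n] (M : Matrix m n 𝕜) :
    ((∑ a, ∑ b, ‖M a b‖ ^ 2 : ℝ) : 𝕜) = (M * Mᴴ).trace := by
  simp [trace, Matrix.mul_apply, RCLike.mul_conj]

theorem sum_sum_norm_sq_unitary_conj {n : Type*} [Fintype n] [DecidableEq n]
    {U V : Matrix n n 𝕜} (hU : U ∈ unitaryGroup n 𝕜) (hV : V ∈ unitaryGroup n 𝕜)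
    (M : Matrix n n 𝕜) :
    ∑ a, ∑ b, ‖(U * M * V) a b‖ ^ 2 = ∑ a, ∑ b, ‖M a b‖ ^ 2 := by
  apply RCLike.ofReal_injective (K := 𝕜)
  have hVV : V * Vᴴ = 1 := mem_unitaryGroup_iff.mp hV
  have hUU : Uᴴ * U = 1 := mem_unitaryGroup_iff'.mp hU
  calc ((∑ a, ∑ b, ‖(U * M * V) a b‖ ^ 2 : ℝ) : 𝕜)
      = (U * (M * (V * Vᴴ) * Mᴴ * Uᴴ)).trace := by
        simp only [sum_sum_norm_sq_eq_trace, conjTranspose_mul, Matrix.mul_assoc]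
    _ = (M * Mᴴ * (Uᴴ * U)).trace := by
        rw [trace_mul_comm, hVV, Matrix.mul_one, Matrix.mul_assoc]
    _ = ((∑ a, ∑ b, ‖M a b‖ ^ 2 : ℝ) : 𝕜) := by
        rw [hUU, Matrix.mul_one, sum_sum_norm_sq_eq_trace]

variable {ι : Type*} [Fintype ι] [DecidableEq ι] {d : ℕ}

theorem sum_sum_norm_sq_krylovTensor_diagonal (l : ι → 𝕜) :
    ∑ a, ∑ b, ‖krylovTensor d (diagonal l) a b‖ ^ 2 =
      d.factorial * ∑ a : Fin d → ι, ‖det (vandermonde (l ∘ a))‖ ^ 2 := by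
  rw [mul_sum]
  refine sum_congr rfl fun a _ => ?_
  simp only [krylovTensor_diagonal, norm_mul, mul_pow, RCLike.norm_natCast, ← mul_sum]
  by_cases ha : a.Injective
  · have hcount : ∑ b, (#{ρ : Equiv.Perm (Fin d) | a ∘ ρ = b} : ℝ) ^ (2 : ℕ) = d.factorial := by
      exact_mod_cast (sum_sq_card_filter_comp_perm_eq ha).trans (by rw [Fintype.card_fin])
    rw [hcount, mul_comm]
  · simp [det_vandermonde_comp_eq_zero l ha]

theorem sum_sum_norm_sq_krylovTensor_unitary_conj {U : Matrix ι ι 𝕜} (hU : U ∈ unitaryGroup ι 𝕜)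
    (l : ι → 𝕜) :
    ∑ a, ∑ b, ‖krylovTensor d (U * diagonal l * star U) a b‖ ^ 2 =
      d.factorial * ∑ a : Fin d → ι, ‖det (vandermonde (l ∘ a))‖ ^ 2 := by
  have hconj : krylovTensor d (U * diagonal l * star U) =
      piKronecker (fun _ => U) * krylovTensor d (diagonal l) * piKronecker (fun _ => star U) :=
    krylovTensor_conj (Unitary.toUnits ⟨U, hU⟩) (diagonal l)
  rw [hconj, sum_sum_norm_sq_unitary_conj (piKronecker_mem_unitaryGroup fun _ => hU)
    (piKronecker_mem_unitaryGroup fun _ => Unitary.star_mem hU),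
    sum_sum_norm_sq_krylovTensor_diagonal]

end UnitaryInvariance

section Hermitian

open Finset Matrix

theorem sum_sum_norm_sq_krylovTensor_of_isHermitian {𝕜 ι : Type*} [RCLike 𝕜] [Fintype ι]
    [LinearOrder ι] {A : Matrix ι ι 𝕜} (hA : A.IsHermitian) (d : ℕ) :
    ∑ a, ∑ b, ‖krylovTensor d A a b‖ ^ 2 =
      (d.factorial : ℝ) ^ 2 * ∑ s ∈ univ.powersetCard d, ∏ i ∈ s, ∏ j ∈ s with i < j,
        (hA.eigenvalues i - hA.eigenvalues j) ^ 2 := by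
  set l : ι → 𝕜 := RCLike.ofReal ∘ hA.eigenvalues with hl
  have hnorm (a : Fin d → ι) :
      ‖det (vandermonde (l ∘ a))‖ ^ 2 = det (vandermonde (hA.eigenvalues ∘ a)) ^ 2 := by
    have hdet : det (vandermonde (l ∘ a)) =
        ((det (vandermonde (hA.eigenvalues ∘ a)) : ℝ) : 𝕜) := by
      simp [det_vandermonde, hl]
    rw [hdet, RCLike.norm_ofReal, sq_abs]
  have hspectral : A = (hA.eigenvectorUnitary : Matrix ι ι 𝕜) * diagonal l *
      star (hA.eigenvectorUnitary : Matrix ι ι 𝕜) := hA.spectral_theorem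
  calc ∑ a, ∑ b, ‖krylovTensor d A a b‖ ^ 2
      = d.factorial * ∑ a : Fin d → ι, ‖det (vandermonde (l ∘ a))‖ ^ 2 := by
        rw [← sum_sum_norm_sq_krylovTensor_unitary_conj hA.eigenvectorUnitary.2, ← hspectral]
    _ = _ := by
        simp only [hnorm]
        rw [sum_det_vandermonde_comp_sq, ← mul_assoc, ← sq]

end Hermitian

section Content

open Finset

variable {κ ι : Type*} [Fintype κ]

/-- The multidegree of the monomial `∏ s, X (c s)` attached to a tuple `c`. -/
noncomputable def content (c : κ → ι) : ι →₀ ℕ :=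
  ∑ s, Finsupp.single (c s) 1

theorem content_apply [DecidableEq ι] (c : κ → ι) (j : ι) : content c j = #{s | c s = j} := by
  simp only [content, Finsupp.coe_finsetSum, Finset.sum_apply, card_filter, Finsupp.single_apply]

theorem content_comp_perm (c : κ → ι) (σ : Equiv.Perm κ) : content (c ∘ σ) = content c :=
  Equiv.sum_comp σ fun s => Finsupp.single (c s) 1

theorem exists_perm_of_content_eq {b c : κ → ι} (h : content b = content c) :
    ∃ σ : Equiv.Perm κ, c = b ∘ σ := by
  classical
  have hfiber (j : ι) : Nonempty ({s // c s = j} ≃ {s // b s = j}) := by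
    have hj := DFunLike.congr_fun h.symm j
    simpa only [← Fintype.card_eq, Fintype.card_subtype, content_apply] using hj
  exact ⟨Equiv.ofFiberEquiv fun j => (hfiber j).some, funext fun s =>
    (Equiv.ofFiberEquiv_map (fun j => (hfiber j).some) s).symm⟩

theorem card_filter_comp_perm_eq [DecidableEq κ] [DecidableEq ι] (b c : κ → ι) :
    #{τ : Equiv.Perm κ | b ∘ τ = c} =
      if content c = content b then #{τ : Equiv.Perm κ | b ∘ τ = b} else 0 := by
  split_ifs with h
  · obtain ⟨σ, rfl⟩ := exists_perm_of_content_eq h.symm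
    refine card_equiv (Equiv.mulRight σ⁻¹) fun τ => ?_
    simp only [mem_filter_univ, Equiv.coe_mulRight, Equiv.Perm.coe_mul, Equiv.Perm.coe_inv,
      ← Function.comp_assoc, Equiv.comp_symm_eq]
  · refine card_eq_zero.mpr (filter_eq_empty_iff.mpr ?_)
    rintro τ - rfl
    exact h (content_comp_perm b τ)

theorem sum_comp_perm {M : Type*} [AddCommMonoid M] [DecidableEq κ] [Fintype ι] [DecidableEq ι]
    (f : (κ → ι) → M) (b : κ → ι) :
    ∑ τ : Equiv.Perm κ, f (b ∘ τ) =
      #{τ : Equiv.Perm κ | b ∘ τ = b} • ∑ c with content c = content b, f c := by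
  have hfiber (c : κ → ι) : ∑ τ ∈ ({τ | b ∘ τ = c} : Finset (Equiv.Perm κ)), f (b ∘ τ) =
      if content c = content b then #{τ : Equiv.Perm κ | b ∘ τ = b} • f c else 0 := by
    rw [sum_eq_card_nsmul (b := f c) fun τ hτ => congrArg f ((mem_filter_univ τ).mp hτ),
      card_filter_comp_perm_eq, ite_smul, zero_smul]
  rw [← sum_fiberwise univ (fun τ : Equiv.Perm κ => b ∘ τ) fun τ => f (b ∘ τ)]
  rw [sum_congr rfl fun c _ => hfiber c, smul_sum, sum_filter]

theorem monomial_content {R : Type*} [CommSemiring R] (c : κ → ι) (r : R) :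
    MvPolynomial.monomial (content c) r = MvPolynomial.C r * ∏ s, MvPolynomial.X (c s) := by
  simp only [content, MvPolynomial.X, ← MvPolynomial.monomial_sum_one, MvPolynomial.C_mul_monomial,
    mul_one]

end Content

section KrylovWedge

open Finset Matrix MvPolynomial

variable {R ι : Type*} [CommRing R] [Fintype ι] {d : ℕ}

/-- The vector `v` as the linear form `∑ j, v j • X j`. -/
noncomputable def linearForm : (ι → R) →ₗ[R] MvPolynomial ι R :=
  Fintype.linearCombination R X

theorem linearForm_apply (v : ι → R) : linearForm v = ∑ j, C (v j) * X j := by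
  simp [linearForm, Fintype.linearCombination_apply, smul_eq_C_mul]

theorem linearForm_single [DecidableEq ι] (j : ι) : linearForm (Pi.single j (1 : R)) = X j := by
  simp [linearForm, Fintype.linearCombination_apply_single]

variable [DecidableEq ι]

/-- The covariant `x ↦ x ∧ A x ∧ ⋯ ∧ A ^ (d - 1) x`, evaluated on `d` linear forms; the values are
polynomials in the coordinates of `x`. -/
noncomputable def krylovWedge (d : ℕ) (A : Matrix ι ι R) :
    (ι → R) [⋀^Fin d]→ₗ[R] MvPolynomial ι R where
  __ := (detRowAlternating (R := MvPolynomial ι R)).toMultilinearMap.restrictScalars R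
    |>.compLinearMap fun _ => .pi fun s : Fin d => linearForm ∘ₗ vecMulLinear (A ^ (s : ℕ))
  map_eq_zero_of_eq' v i j hij hne := det_zero_of_row_eq hne (by ext1 s; simp [hij])

theorem krylovWedge_apply (A : Matrix ι ι R) (v : Fin d → ι → R) :
    krylovWedge d A v = det (of fun r s : Fin d => linearForm (v r ᵥ* A ^ (s : ℕ))) := rfl

theorem krylovWedge_basisFun (A : Matrix ι ι R) (a : Fin d → ι) :
    krylovWedge d A (Pi.basisFun R ι ∘ a) =
      ∑ c : Fin d → ι, monomial (content c) (krylovMinor A a c) := by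
  simp only [krylovWedge_apply, krylovMinor, monomial_content, det_apply', of_apply, map_sum,
    Function.comp_apply, Pi.basisFun_apply, single_one_vecMul, linearForm_apply,
    prod_univ_sum, Fintype.piFinset_univ]
  rw [sum_comm]
  refine sum_congr rfl fun σ _ => ?_
  rw [Finset.mul_sum]
  refine sum_congr rfl fun c _ => ?_
  simp only [prod_mul_distrib, map_mul, map_prod, map_intCast, mul_assoc, row_apply]

/-- The coordinate tensor of an alternating map with values in forms of degree `d`. The
multiplicity makes it the full polarization: repeated indices are weighted by their stabilizer. -/
noncomputable def polarization (R ι : Type*) [CommRing R] [Fintype ι] [DecidableEq ι] (d : ℕ) :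
    (ι → R) [⋀^Fin d]→ₗ[R] MvPolynomial ι R →ₗ[R] ((Fin d → ι) × (Fin d → ι) → R) :=
  { toFun g p := #{τ : Equiv.Perm (Fin d) | p.2 ∘ τ = p.2} •
      coeff (content p.2) (g (Pi.basisFun R ι ∘ p.1))
    map_add' g g' := by ext p; simp
    map_smul' z g := by ext p; simp [mul_left_comm] }

theorem polarization_apply (g : (ι → R) [⋀^Fin d]→ₗ[R] MvPolynomial ι R)
    (p : (Fin d → ι) × (Fin d → ι)) :
    polarization R ι d g p = #{τ : Equiv.Perm (Fin d) | p.2 ∘ τ = p.2} •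
      coeff (content p.2) (g (Pi.basisFun R ι ∘ p.1)) := rfl

theorem polarization_krylovWedge (A : Matrix ι ι R) :
    polarization R ι d (krylovWedge d A) = fun p => krylovTensor d A p.1 p.2 := by
  ext ⟨a, b⟩
  rw [polarization_apply, krylovTensor_apply, sum_comp_perm,
    krylovWedge_basisFun, coeff_sum, sum_filter]
  simp only [coeff_monomial]

end KrylovWedge

section KoszulKernel

open Finset Matrix MvPolynomial

theorem det_isHomogeneous {R σ m : Type*} [CommRing R] [Fintype m] [DecidableEq m]
    {M : Matrix m m (MvPolynomial σ R)} (hM : ∀ i j, (M i j).IsHomogeneous 1) :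
    M.det.IsHomogeneous (Fintype.card m) := by
  rw [det_apply', ← mem_homogeneousSubmodule]
  refine Submodule.sum_mem _ fun τ _ => ?_
  rw [← zsmul_eq_mul]
  refine zsmul_mem ?_ _
  simpa using IsHomogeneous.prod univ _ (fun _ => 1) fun i _ => hM (τ i) i

variable {R ι : Type*} [CommRing R] [Fintype ι]

theorem linearForm_isHomogeneous (v : ι → R) : (linearForm v).IsHomogeneous 1 := by
  rw [linearForm_apply]
  exact IsHomogeneous.sum _ _ _ fun j _ => isHomogeneous_C_mul_X _ _

/-- The alternating maps with values in forms of degree `d` that lie in the kernel of the Koszul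
differential `Sym ^ d ⊗ Λ ^ d → Sym ^ (d + 1) ⊗ Λ ^ (d + 1)`, the wedge product with the
tautological vector `x`. -/
def koszulKernel (R ι : Type*) [CommRing R] [Fintype ι] (d : ℕ) :
    Submodule R ((ι → R) [⋀^Fin d]→ₗ[R] MvPolynomial ι R) where
  carrier := {g | (∀ v, (g v).IsHomogeneous d) ∧ ∀ v : Fin (d + 1) → ι → R,
    ∑ i : Fin (d + 1), (-1) ^ (i : ℕ) * linearForm (v i) * g (i.removeNth v) = 0}
  zero_mem' := by simp [isHomogeneous_zero]
  add_mem' := by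
    rintro g g' ⟨hdeg, hrel⟩ ⟨hdeg', hrel'⟩
    exact ⟨fun v => (hdeg v).add (hdeg' v), fun v => by
      simp only [AlternatingMap.add_apply, mul_add, sum_add_distrib, hrel, hrel', add_zero]⟩
  smul_mem' := by
    rintro r g ⟨hdeg, hrel⟩
    exact ⟨fun v => (homogeneousSubmodule ι R d).smul_mem r (hdeg v), fun v => by
      simp only [AlternatingMap.smul_apply, mul_smul_comm, ← smul_sum, hrel, smul_zero]⟩

theorem mem_koszulKernel {d : ℕ} {g : (ι → R) [⋀^Fin d]→ₗ[R] MvPolynomial ι R} :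
    g ∈ koszulKernel R ι d ↔ (∀ v, (g v).IsHomogeneous d) ∧ ∀ v : Fin (d + 1) → ι → R,
      ∑ i : Fin (d + 1), (-1) ^ (i : ℕ) * linearForm (v i) * g (i.removeNth v) = 0 := Iff.rfl

theorem krylovWedge_mem_koszulKernel [DecidableEq ι] (e : ℕ) (A : Matrix ι ι R) :
    krylovWedge (e + 1) A ∈ koszulKernel R ι (e + 1) := by
  refine mem_koszulKernel.mpr ⟨fun v => ?_, fun v => ?_⟩
  · rw [krylovWedge_apply]
    have hdet := det_isHomogeneous (M := of fun r s : Fin (e + 1) =>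
      linearForm (v r ᵥ* A ^ (s : ℕ))) fun r s => linearForm_isHomogeneous _
    rwa [Fintype.card_fin] at hdet
  · -- The sum expands a determinant whose first two columns both hold the forms `v i`.
    let M : Matrix (Fin (e + 2)) (Fin (e + 2)) (MvPolynomial ι R) := of fun r =>
      Fin.cons (linearForm (v r)) fun s : Fin (e + 1) => linearForm (v r ᵥ* A ^ (s : ℕ))
    have hdet : M.det = 0 :=
      det_zero_of_column_eq (i := 0) (j := 1) (by simp) fun r => by
        change linearForm (v r) = linearForm (v r ᵥ* A ^ 0)
        rw [pow_zero, vecMul_one]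
    rwa [det_succ_column_zero] at hdet

theorem sum_X_mul_eq_zero_of_mem_koszulKernel {d : ℕ}
    {g : (ι → R) [⋀^Fin d]→ₗ[R] MvPolynomial ι R} (hg : g ∈ koszulKernel R ι d)
    (c : Fin (d + 1) → ι) :
    ∑ i : Fin (d + 1), (-1 : R) ^ (i : ℕ) • (X (c i) * g (Pi.basisFun R ι ∘ i.removeNth c)) =
      0 := by
  classical
  rw [← (mem_koszulKernel.mp hg).2 (Pi.basisFun R ι ∘ c)]
  refine sum_congr rfl fun i _ => ?_
  rw [Function.comp_apply, Pi.basisFun_apply, linearForm_single, smul_eq_C_mul, map_pow, map_neg,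
    map_one, mul_assoc]
  rfl

end KoszulKernel

section KoszulIndex

open Finset

theorem sum_card_filter_lt {ι M : Type*} [Fintype ι] [LinearOrder ι] [AddCommMonoid M]
    (f : ℕ → M) : ∑ m : ι, f #{j | m < j} = ∑ j ∈ range (Fintype.card ι), f j := by
  have hcard (m : Fin (Fintype.card ι)) :
      #{j | Fintype.orderIsoFinOfCardEq ι rfl m < j} = Fintype.card ι - 1 - m := by
    rw [← Fin.card_Ioi]
    exact (card_equiv (Fintype.orderIsoFinOfCardEq ι rfl).toEquiv fun j => by simp).symm
  rw [← (Fintype.orderIsoFinOfCardEq ι rfl).toEquiv.sum_comp]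
  simp only [RelIso.coe_fn_toEquiv, hcard]
  rw [Fin.sum_univ_eq_sum_range fun m => f (Fintype.card ι - 1 - m), sum_range_reflect]

theorem sum_range_choose_mul_choose (c e k : ℕ) :
    ∑ j ∈ range c, (j + e).choose e * j.choose k =
      (c + e).choose (k + e + 1) * (k + e).choose k := by
  induction c with
  | zero => simp [Nat.choose_eq_zero_of_lt]
  | succ c ih =>
    have hmul := Nat.choose_mul (n := c + e) (k := k + e) (s := e) (by omega)
    simp only [Nat.add_sub_cancel] at hmul
    rw [sum_range_succ, ih, ← hmul, Nat.choose_symm_add, ← add_mul, add_right_comm c 1 e,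
      Nat.choose_succ_succ, add_comm ((c + e).choose _)]

/-- The positions `(m, β, K)` of the leading coordinates of the elements of the Koszul kernel: the
coefficient of `X m * X ^ β` on the basis multivector complementary to `K`, where `m` is minimal
for the variables of `β` and strictly below `K`. -/
abbrev KoszulIndex (ι : Type*) [Fintype ι] [LinearOrder ι] (e k : ℕ) : Type _ :=
  Σ m : ι, finsuppAntidiag ({j | m ≤ j} : Finset ι) e × powersetCard k ({j | m < j} : Finset ι)

theorem card_koszulIndex (ι : Type*) [Fintype ι] [LinearOrder ι] (e k : ℕ) :
    Fintype.card (KoszulIndex ι e k) =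
      (Fintype.card ι + e).choose (k + e + 1) * (k + e).choose k := by
  have hle (m : ι) : #{j | m ≤ j} = #{j | m < j} + 1 := by
    rw [← card_insert_of_notMem (a := m) (by simp)]
    congr 1
    ext j
    simp [le_iff_eq_or_lt, eq_comm]
  rw [← sum_range_choose_mul_choose, ← sum_card_filter_lt, Fintype.card_sigma]
  refine sum_congr rfl fun m _ => ?_
  rw [Fintype.card_prod, Fintype.card_coe, Fintype.card_coe, card_finsuppAntidiag_nat_eq_choose,
    card_powersetCard, hle, add_right_comm, Nat.add_sub_cancel]

end KoszulIndex

section KoszulCoord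

open Finset MvPolynomial

variable {R ι : Type*} [CommRing R] [Fintype ι] [LinearOrder ι] {e k : ℕ}

theorem card_compl_of_mem_powersetCard (hι : Fintype.card ι = k + (e + 1)) {s K : Finset ι}
    (hK : K ∈ powersetCard k s) : #Kᶜ = e + 1 := by
  rw [card_compl, (mem_powersetCard.mp hK).2, hι, Nat.add_sub_cancel_left]

/-- The leading coordinates of an alternating map with polynomial values. -/
noncomputable def koszulCoord (R : Type*) [CommRing R] (hι : Fintype.card ι = k + (e + 1)) :
    (ι → R) [⋀^Fin (e + 1)]→ₗ[R] MvPolynomial ι R →ₗ[R] (KoszulIndex ι e k → R) :=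
  { toFun g x := coeff (Finsupp.single x.1 1 + x.2.1.1) (g (Pi.basisFun R ι ∘
      (x.2.2.1ᶜ).orderEmbOfFin (card_compl_of_mem_powersetCard hι x.2.2.2)))
    map_add' g g' := by ext x; simp
    map_smul' r g := by ext x; simp }

variable {hι : Fintype.card ι = k + (e + 1)} {g : (ι → R) [⋀^Fin (e + 1)]→ₗ[R] MvPolynomial ι R}
  {a : Fin (e + 1) → ι} {α : ι →₀ ℕ} {m : ι}

theorem coeff_eq_zero_of_mem_range (hdeg : ∀ v, (g v).IsHomogeneous (e + 1))
    (hg : koszulCoord R hι g = 0) (hm : m ∈ α.support) (hma : m ∈ Set.range a)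
    (hα : ∀ j ∈ α.support, m ≤ j) (ha : ∀ j ∉ Set.range a, m ≤ j) :
    coeff α (g (Pi.basisFun R ι ∘ a)) = 0 := by
  by_cases hinj : a.Injective
  swap
  · rw [g.map_eq_zero_of_not_injective _ (mt Function.Injective.of_comp hinj), coeff_zero]
  by_cases hαdeg : α.degree = e + 1
  swap
  · exact (hdeg _).coeff_eq_zero hαdeg
  obtain ⟨β, rfl⟩ : ∃ β, α = Finsupp.single m 1 + β :=
    exists_add_of_le (Finsupp.single_le_iff.mpr
      (Nat.one_le_iff_ne_zero.mpr (Finsupp.mem_support_iff.mp hm)))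
  have hβ : β ∈ finsuppAntidiag ({j | m ≤ j} : Finset ι) e := by
    refine mem_finsuppAntidiag'.mpr ⟨?_, fun j hj => ?_⟩
    · change β.degree = e
      rw [map_add, Finsupp.degree_single] at hαdeg
      omega
    · refine (mem_filter_univ j).mpr (hα j (Finsupp.mem_support_iff.mpr ?_))
      have := Finsupp.mem_support_iff.mp hj
      simp [this]
  have hK : (univ.image a)ᶜ ∈ powersetCard k ({j | m < j} : Finset ι) := by
    refine mem_powersetCard.mpr ⟨fun j hj => ?_, ?_⟩
    · have hja : j ∉ Set.range a := by simpa using hj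
      exact (mem_filter_univ j).mpr ((ha j hja).lt_of_ne fun h => hja (h ▸ hma))
    · rw [card_compl, card_image_of_injective _ hinj, card_univ, Fintype.card_fin, hι,
        Nat.add_sub_cancel]
  set b := ((univ.image a)ᶜᶜ).orderEmbOfFin (card_compl_of_mem_powersetCard hι hK)
  obtain ⟨σ, hσ⟩ : ∃ σ : Equiv.Perm (Fin (e + 1)), a = b ∘ σ :=
    exists_perm_eq_comp_of_range_eq b.injective hinj (by simp [b])
  have hcoord : coeff (Finsupp.single m 1 + β) (g (Pi.basisFun R ι ∘ b)) = 0 :=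
    congrFun hg ⟨m, ⟨β, hβ⟩, ⟨_, hK⟩⟩
  rw [hσ, ← Function.comp_assoc, g.map_perm, Units.smul_def, coeff_smul, hcoord, smul_zero]

theorem coeff_X_mul_removeNth_eq_zero (hdeg : ∀ v, (g v).IsHomogeneous (e + 1))
    (hg : koszulCoord R hι g = 0) (hma : m ∉ Set.range a) (hα : ∀ j ∈ α.support, m ≤ j)
    (ha : ∀ j ∉ Set.range a, m ≤ j) (i : Fin (e + 1)) :
    coeff (Finsupp.single m 1 + α)
      (X (a i) * g (Pi.basisFun R ι ∘ i.succ.removeNth (Fin.cons m a : Fin (e + 2) → ι))) =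
        0 := by
  rw [coeff_X_mul']
  split_ifs with hi
  swap
  · rfl
  have hne : a i ≠ m := fun h => hma ⟨i, h⟩
  have hai : a i ∈ α.support := by simpa [Finsupp.single_eq_of_ne hne] using hi
  have hrange : Set.range (i.succ.removeNth (Fin.cons m a : Fin (e + 2) → ι)) =
      (Fin.cons m a : Fin (e + 2) → ι) '' {i.succ}ᶜ := by
    rw [← Fin.range_succAbove, ← Set.range_comp]
    rfl
  refine coeff_eq_zero_of_mem_range hdeg hg (m := m) ?_ ?_ (fun j hj => ?_) fun j hj => ?_
  · simp [Finsupp.single_eq_of_ne hne.symm]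
  · exact hrange ▸ ⟨0, (Fin.succ_ne_zero i).symm, rfl⟩
  · rcases eq_or_ne j m with rfl | hjm
    · exact le_rfl
    · refine hα j (Finsupp.mem_support_iff.mpr fun h => Finsupp.mem_support_iff.mp hj ?_)
      simp [Finsupp.single_eq_of_ne hjm, h]
  · by_cases hja : j ∈ Set.range a
    · obtain ⟨t, rfl⟩ := hja
      obtain rfl : t = i := by
        by_contra hti
        exact hj (hrange ▸ ⟨t.succ, mt Fin.succ_inj.mp hti, rfl⟩)
      exact hα _ hai
    · exact ha j hja

-- In the Koszul relation at `(m, a)`, every term but the first has `m` among its indices.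
theorem coeff_eq_zero_of_notMem_range (hker : g ∈ koszulKernel R ι (e + 1))
    (hg : koszulCoord R hι g = 0) (hma : m ∉ Set.range a)
    (hα : ∀ j ∈ α.support, m ≤ j) (ha : ∀ j ∉ Set.range a, m ≤ j) :
    coeff α (g (Pi.basisFun R ι ∘ a)) = 0 := by
  have hrel := congrArg (coeff (Finsupp.single m 1 + α))
    (sum_X_mul_eq_zero_of_mem_koszulKernel hker (Fin.cons m a))
  rw [Fin.sum_univ_succ, coeff_add, coeff_sum, Finset.sum_eq_zero fun i _ => by
    rw [coeff_smul, Fin.cons_succ, coeff_X_mul_removeNth_eq_zero hker.1 hg hma hα ha i,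
      smul_zero]] at hrel
  simpa [coeff_X_mul] using hrel

theorem koszulCoord_injOn : Set.InjOn (koszulCoord R hι) (koszulKernel R ι (e + 1)) := by
  rw [← LinearMap.disjoint_ker_iff_injOn, LinearMap.disjoint_ker]
  intro g hker hg
  refine (Pi.basisFun R ι).ext_alternating fun a _ => ?_
  change g (Pi.basisFun R ι ∘ a) = 0
  ext α
  rw [coeff_zero]
  by_cases hα : α = 0
  · exact (hker.1 _).coeff_eq_zero (by simp [hα])
  let s : Finset ι := {j | j ∈ α.support ∨ j ∉ Set.range a}
  have hs : s.Nonempty := by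
    obtain ⟨j, hj⟩ := Finsupp.support_nonempty_iff.mpr hα
    exact ⟨j, (mem_filter_univ j).mpr (.inl hj)⟩
  have hmin (j : ι) (hj : j ∈ α.support ∨ j ∉ Set.range a) : s.min' hs ≤ j :=
    s.min'_le j ((mem_filter_univ j).mpr hj)
  have hm := (mem_filter_univ _).mp (s.min'_mem hs)
  by_cases hma : s.min' hs ∈ Set.range a
  · exact coeff_eq_zero_of_mem_range hker.1 hg (hm.resolve_right (not_not.mpr hma)) hma
      (fun j hj => hmin j (.inl hj)) fun j hj => hmin j (.inr hj)
  · exact coeff_eq_zero_of_notMem_range hker hg hma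
      (fun j hj => hmin j (.inl hj)) fun j hj => hmin j (.inr hj)

theorem koszulCoord_domRestrict_injective (hι : Fintype.card ι = k + (e + 1)) :
    Function.Injective ((koszulCoord R hι).domRestrict (koszulKernel R ι (e + 1))) :=
  (koszulCoord_injOn (hι := hι)).injective

theorem finite_koszulKernel [IsNoetherianRing R] (hι : Fintype.card ι = k + (e + 1)) :
    Module.Finite R (koszulKernel R ι (e + 1)) :=
  .of_injective _ (koszulCoord_domRestrict_injective hι)

theorem finrank_koszulKernel_le [Nontrivial R] (hι : Fintype.card ι = k + (e + 1)) :
    Module.finrank R (koszulKernel R ι (e + 1)) ≤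
      (Fintype.card ι + e).choose (k + e + 1) * (k + e).choose k := by
  rw [← card_koszulIndex, ← Module.finrank_fintype_fun_eq_card R]
  exact LinearMap.finrank_le_finrank_of_injective (koszulCoord_domRestrict_injective hι)

end KoszulCoord

section SumOfSquares

open Finset Matrix MvPolynomial

theorem eval_krylovTensor_mvPolynomialX {R ι : Type*} [CommRing R] [Fintype ι] [DecidableEq ι]
    {d : ℕ} (A : Matrix ι ι R) (a b : Fin d → ι) :
    eval (fun p : ι × ι => A p.1 p.2) (krylovTensor d (mvPolynomialX ι ι R) a b) =
      krylovTensor d A a b := by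
  rw [← krylovTensor_map, mvPolynomialX_mapMatrix_eval]

variable {𝕜 : Type*} [RCLike 𝕜]

theorem exists_sum_norm_inner_sq_eq {E : Type*} [NormedAddCommGroup E] [InnerProductSpace 𝕜 E]
    (S : Submodule 𝕜 E) [FiniteDimensional 𝕜 S] {N : ℕ} (hN : Module.finrank 𝕜 S ≤ N) :
    ∃ w : Fin N → E, ∀ x ∈ S, ∑ m, ‖inner 𝕜 (w m) x‖ ^ 2 = ‖x‖ ^ 2 := by
  obtain ⟨r, rfl⟩ := Nat.exists_eq_add_of_le hN
  refine ⟨Fin.append (fun i => (stdOrthonormalBasis 𝕜 S i : E)) 0, fun x hx => ?_⟩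
  have hsum := (stdOrthonormalBasis 𝕜 S).sum_sq_norm_inner_right ⟨x, hx⟩
  simp only [Submodule.coe_inner, Submodule.coe_norm] at hsum
  rw [Fin.sum_univ_add, ← hsum]
  simp

variable {ι : Type*} [Fintype ι] [LinearOrder ι] {e k : ℕ}

theorem exists_sum_norm_sq_krylovTensor_eq (hι : Fintype.card ι = k + (e + 1)) :
    ∃ w : Fin ((Fintype.card ι + e).choose (k + e + 1) * (k + e).choose k) →
        (Fin (e + 1) → ι) → (Fin (e + 1) → ι) → 𝕜,
      ∀ A : Matrix ι ι 𝕜, ∑ m, ‖∑ a, ∑ b, w m a b * krylovTensor (e + 1) A a b‖ ^ 2 =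
        ∑ a, ∑ b, ‖krylovTensor (e + 1) A a b‖ ^ 2 := by
  have := finite_koszulKernel (R := 𝕜) hι
  let T := (WithLp.linearEquiv 2 𝕜 _).symm.toLinearMap ∘ₗ polarization 𝕜 ι (e + 1)
  obtain ⟨w, hw⟩ := exists_sum_norm_inner_sq_eq ((koszulKernel 𝕜 ι (e + 1)).map T)
    ((Submodule.finrank_map_le _ _).trans (finrank_koszulKernel_le hι))
  refine ⟨fun m a b => star (w m (a, b)), fun A => ?_⟩
  have hA := hw _ (Submodule.mem_map_of_mem (krylovWedge_mem_koszulKernel e A))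
  have hT : T (krylovWedge (e + 1) A) = WithLp.toLp 2 fun p => krylovTensor (e + 1) A p.1 p.2 :=
    congrArg _ (polarization_krylovWedge A)
  rw [hT, EuclideanSpace.norm_sq_eq, Fintype.sum_prod_type] at hA
  simp only [PiLp.inner_apply, Fintype.sum_prod_type, RCLike.inner_apply'] at hA
  exact hA

theorem stmt_17_general {N : ℕ} (hk : k < Fintype.card ι)
    (hN : N = (2 * Fintype.card ι - k - 1).choose (Fintype.card ι) *
      (Fintype.card ι - 1).choose k) :
    ∃ q : Fin N → MvPolynomial (ι × ι) 𝕜,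
      ∀ (A : Matrix ι ι 𝕜) (hA : A.IsHermitian),
        ∑ s ∈ univ.powersetCard (Fintype.card ι - k), ∏ i ∈ s, ∏ j ∈ s with i < j,
          (hA.eigenvalues i - hA.eigenvalues j) ^ 2 =
        ∑ m, ‖eval (fun p => A p.1 p.2) (q m)‖ ^ 2 := by
  obtain ⟨e, hι⟩ : ∃ e, Fintype.card ι = k + (e + 1) := Nat.exists_eq_add_of_lt hk
  obtain rfl : N = (Fintype.card ι + e).choose (k + e + 1) * (k + e).choose k := by
    rw [hN, hι]
    congr 2
    omega
  rw [show Fintype.card ι - k = e + 1 by omega]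
  obtain ⟨w, hw⟩ := exists_sum_norm_sq_krylovTensor_eq (𝕜 := 𝕜) hι
  refine ⟨fun m => C ((e + 1).factorial : 𝕜)⁻¹ * ∑ a, ∑ b, C (w m a b) *
    krylovTensor (e + 1) (mvPolynomialX ι ι 𝕜) a b, fun A hA => ?_⟩
  have hd : ((e + 1).factorial : ℝ) ≠ 0 := Nat.cast_ne_zero.mpr (Nat.factorial_ne_zero _)
  simp only [map_mul, map_sum, eval_C, eval_krylovTensor_mvPolynomialX, norm_mul, mul_pow,
    ← Finset.mul_sum, hw, sum_sum_norm_sq_krylovTensor_of_isHermitian hA]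
  rw [norm_inv, RCLike.norm_natCast, inv_pow, inv_mul_cancel_left₀ (pow_ne_zero 2 hd)]

end SumOfSquares

/-- The `k`-subdiscriminant of Hermitian `n×n` matrices is a sum of `2N` squares,
where `N = binom(2n-k-1, n) · binom(n-1, k)` is the dimension of the irreducible
`SL(n,ℂ)`-module with highest weight `(n-k, 1^k)`. -/
theorem stmt_17 (n k : ℕ) (hn : 3 ≤ n) (hk : k ≤ n - 3) (N : ℕ)
    (hN : N = Nat.choose (2 * n - k - 1) n * Nat.choose (n - 1) k) :
    ∃ q : Fin N → MvPolynomial (Fin n × Fin n) ℂ,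
      ∀ A : Matrix (Fin n) (Fin n) ℂ, ∀ hA : A.IsHermitian,
        ∑ s ∈ Finset.univ.powersetCard (n - k),
          ∏ i ∈ s, ∏ j ∈ s.filter (fun j => i < j),
            (hA.eigenvalues i - hA.eigenvalues j) ^ 2
        = ∑ m : Fin N, ‖MvPolynomial.eval (fun p => A p.1 p.2) (q m)‖ ^ 2 := by
  simpa only [Fintype.card_fin] using stmt_17_general (𝕜 := ℂ) (ι := Fin n) (k := k) (N := N)
    (by rw [Fintype.card_fin]; omega) (by rwa [Fintype.card_fin])
end
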